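/- Let H be a finite simple graph on h vertices with at least one edge. If there are infinitely many (1/(2h))-near Fermat primes, then the forbidden-subgraph property Q_n^H is evasive for all sufficiently large n. -/

import Mathlib

/-- A deterministic decision tree over a set of Boolean variables indexed by `ι`. -/
inductive DecisionTree (ι : Type) : Type
  | leaf : Bool → DecisionTree ι
  | node : ι → DecisionTree ι → DecisionTree ι → DecisionTree ι

namespace DecisionTree

/-- Evaluate a decision tree on an input assignment. -/
def eval {ι : Type} : DecisionTree ι → (ι → Bool) → Bool
  | leaf b, _ => b
  | node i t f, x => if x i then t.eval x else f.eval x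

/-- The depth (worst-case number of queries) of a decision tree. -/
def depth {ι : Type} : DecisionTree ι → ℕ
  | leaf _ => 0
  | node _ t f => max t.depth f.depth + 1

end DecisionTree

/-- The variables of a graph property on `n` vertices: pairs `i < j`. -/
def EdgeVar (n : ℕ) := {p : Fin n × Fin n // p.1 < p.2}

/-- The graph on `Fin n` determined by an assignment to the adjacency variables. -/
def graphOfInput {n : ℕ} (x : EdgeVar n → Bool) : SimpleGraph (Fin n) :=
  SimpleGraph.fromRel (fun i j => ∃ h : i < j, x ⟨(i, j), h⟩ = true)

/-- The deterministic query (decision-tree) complexity of a set of graphs on `Fin n`,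
viewed as a Boolean function of the adjacency variables. -/
noncomputable def queryComplexity {n : ℕ} (P : Set (SimpleGraph (Fin n))) : ℕ :=
  sInf {d | ∃ T : DecisionTree (EdgeVar n),
    (∀ x, T.eval x = true ↔ graphOfInput x ∈ P) ∧ T.depth ≤ d}

/-- A set of graphs on `Fin n` is evasive if its query complexity is `n(n-1)/2`,
the total number of adjacency variables. -/
def Evasive {n : ℕ} (P : Set (SimpleGraph (Fin n))) : Prop :=
  queryComplexity P = n * (n - 1) / 2

/-- `G` contains a (not necessarily induced) subgraph isomorphic to `H`. -/
def ContainsCopy {V : Type} (H : SimpleGraph V) {W : Type} (G : SimpleGraph W) : Prop :=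
  ∃ f : V → W, Function.Injective f ∧ ∀ v w : V, H.Adj v w → G.Adj (f v) (f w)

/-- The forbidden-subgraph property `Q_n^H`: graphs on `Fin n` containing no copy of `H`. -/
def ForbiddenSubgraphProperty {V : Type} (H : SimpleGraph V) (n : ℕ) :
    Set (SimpleGraph (Fin n)) :=
  {G | ¬ ContainsCopy H G}

/-- A prime `p` is an `ε`-near Fermat prime if `2^s ∣ p - 1` and `(p-1)/2^s ≤ p^ε`
for some `s ≥ 0`. -/
def NearFermatPrime (ε : ℝ) (p : ℕ) : Prop :=
  p.Prime ∧ ∃ s : ℕ, 2 ^ s ∣ p - 1 ∧ (((p - 1) / 2 ^ s : ℕ) : ℝ) ≤ (p : ℝ) ^ ε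

section ChainComplex

variable {α : Type*} [Fintype α] [DecidableEq α]

/-- The simplicial boundary over `𝔽₂`, acting on functions on finite sets. -/
def boundary (c : Finset α → ZMod 2) (A : Finset α) : ZMod 2 :=
  ∑ x ∈ Aᶜ, c (insert x A)

/-- `c` is a chain of the family `K`. -/
def SupportedOn (K : Set (Finset α)) (c : Finset α → ZMod 2) : Prop :=
  ∀ A, A ∉ K → c A = 0

/-- The augmented `𝔽₂`-chain complex of `K` is exact. -/
def AcyclicFamily (K : Set (Finset α)) : Prop :=
  ∀ c, SupportedOn K c → boundary c = 0 → ∃ d, SupportedOn K d ∧ boundary d = c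

/-- `K` is closed under taking subsets. -/
def DownClosed (K : Set (Finset α)) : Prop :=
  ∀ A ∈ K, ∀ B, B ⊆ A → B ∈ K

lemma boundary_add (c d : Finset α → ZMod 2) : boundary (c + d) = boundary c + boundary d := by
  ext A
  simp [boundary, Finset.sum_add_distrib]

lemma boundary_smul (r : ZMod 2) (c : Finset α → ZMod 2) :
    boundary (r • c) = r • boundary c := by
  ext A
  simp [boundary, Finset.mul_sum]

lemma boundary_boundary (c : Finset α → ZMod 2) : boundary (boundary c) = 0 := by
  ext A
  simp only [boundary, Pi.zero_apply]
  rw [Finset.sum_sigma']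
  refine Finset.sum_involution (fun z _ => ⟨z.2, z.1⟩) ?_ ?_ ?_ ?_
  · rintro ⟨x, y⟩ h
    simp only [Finset.insert_comm y x]
    exact CharTwo.add_self_eq_zero _
  · rintro ⟨x, y⟩ h _
    simp only [Finset.mem_sigma, Finset.mem_compl, Finset.mem_insert, not_or] at h
    simp only [ne_eq, Sigma.mk.injEq, not_and]
    intro hh
    exact absurd hh h.2.1
  · rintro ⟨x, y⟩ h
    simp only [Finset.mem_sigma, Finset.mem_compl, Finset.mem_insert, not_or] at h ⊢
    exact ⟨h.2.2, fun e => h.2.1 e.symm, h.1⟩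
  · rintro ⟨x, y⟩ h
    rfl

lemma SupportedOn.add {K : Set (Finset α)} {c d : Finset α → ZMod 2}
    (hc : SupportedOn K c) (hd : SupportedOn K d) : SupportedOn K (c + d) := fun A hA => by
  simp [hc A hA, hd A hA]

lemma SupportedOn.mono {K L : Set (Finset α)} {c : Finset α → ZMod 2}
    (hc : SupportedOn K c) (h : K ⊆ L) : SupportedOn L c := fun A hA => hc A fun h' => hA (h h')

lemma SupportedOn.boundary {K : Set (Finset α)} (hK : DownClosed K) {c : Finset α → ZMod 2}
    (hc : SupportedOn K c) : SupportedOn K (boundary c) := fun A hA =>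
  Finset.sum_eq_zero fun x _ => hc _ fun h => hA (hK _ h _ (Finset.subset_insert x A))

/-- A cone is acyclic. -/
lemma acyclicFamily_of_cone {K : Set (Finset α)} (y : α)
    (hy : ∀ A ∈ K, insert y A ∈ K) : AcyclicFamily K := by
  intro c hc hbd
  refine ⟨fun A => if y ∈ A then c (A.erase y) else 0, ?_, ?_⟩
  · intro A hA
    dsimp only
    split_ifs with h
    · apply hc
      intro h'
      have := hy _ h'
      rw [Finset.insert_erase h] at this
      exact hA this
    · rfl
  · ext A
    simp only [boundary]
    by_cases h : y ∈ A
    · have h0 := congrFun hbd (A.erase y)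
      have hcompl : (A.erase y)ᶜ = insert y Aᶜ := by
        ext z; simp only [Finset.mem_compl, Finset.mem_erase, Finset.mem_insert]; tauto
      rw [boundary, hcompl, Finset.sum_insert (by simpa using h), Finset.insert_erase h] at h0
      have h1 : ∀ x ∈ Aᶜ, (if y ∈ insert x A then c ((insert x A).erase y) else 0)
          = c (insert x (A.erase y)) := by
        intro x hx
        have hxy : x ≠ y := by rintro rfl; exact (Finset.mem_compl.1 hx) h
        rw [if_pos (Finset.mem_insert_of_mem h), Finset.erase_insert_of_ne hxy]
      rw [Finset.sum_congr rfl h1]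
      exact (CharTwo.add_eq_zero.1 h0).symm
    · rw [Finset.sum_eq_single y]
      · simp [Finset.erase_insert h]
      · intro x _ hx
        rw [if_neg]
        simp only [Finset.mem_insert, not_or]
        exact ⟨fun e => hx e.symm, h⟩
      · intro h'
        exact absurd (Finset.mem_compl.2 h) h'

/-- A family is acyclic when the deletion and the link of a vertex are. -/
lemma acyclicFamily_of_deletion_link {K : Set (Finset α)} (hK : DownClosed K) (x : α)
    (hdel : AcyclicFamily {A | A ∈ K ∧ x ∉ A})
    (hlk : AcyclicFamily {A | insert x A ∈ K ∧ x ∉ A}) : AcyclicFamily K := by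
  intro c hc hbd
  obtain ⟨d₁, hd₁, hbd₁⟩ := hlk (fun A => if x ∈ A then 0 else c (insert x A)) (by
    intro A hA
    dsimp only
    split_ifs with h
    · rfl
    · exact hc _ fun h' => hA ⟨h', h⟩) (by
    ext A
    simp only [boundary, Pi.zero_apply]
    by_cases h : x ∈ A
    · exact Finset.sum_eq_zero fun z _ => if_pos (Finset.mem_insert_of_mem h)
    · have h0 := congrFun hbd (insert x A)
      have hcompl : Aᶜ = insert x (insert x A)ᶜ := by
        ext z; simp only [Finset.mem_compl, Finset.mem_insert]
        by_cases hz : z = x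
        · simp [hz, h]
        · simp [hz]
      rw [hcompl, Finset.sum_insert (by simp), if_pos (Finset.mem_insert_self _ _), zero_add]
      rw [boundary] at h0
      refine Eq.trans (Finset.sum_congr rfl fun z hz => ?_) h0
      simp only [Finset.mem_compl, Finset.mem_insert, not_or] at hz
      rw [if_neg (by simp only [Finset.mem_insert, not_or]; exact ⟨fun e => hz.1 e.symm, h⟩),
        Finset.insert_comm])
  set e : Finset α → ZMod 2 := fun A => if x ∈ A then d₁ (A.erase x) else 0 with he
  have heK : SupportedOn K e := by
    intro A hA
    simp only [he]
    split_ifs with h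
    · apply hd₁
      rintro ⟨h', -⟩
      rw [Finset.insert_erase h] at h'
      exact hA h'
    · rfl
  have hbe : ∀ A, x ∈ A → boundary e A = c A := by
    intro A h
    have h0 := congrFun hbd₁ (A.erase x)
    have hcompl : (A.erase x)ᶜ = insert x Aᶜ := by
      ext z; simp only [Finset.mem_compl, Finset.mem_erase, Finset.mem_insert]; tauto
    rw [boundary, hcompl, Finset.sum_insert (by simpa using h),
      hd₁ (insert x (A.erase x)) (by simp), zero_add, if_neg (by simp),
      Finset.insert_erase h] at h0
    rw [← h0, boundary]
    refine Finset.sum_congr rfl fun z hz => ?_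
    have hxy : z ≠ x := by rintro rfl; exact (Finset.mem_compl.1 hz) h
    simp only [he]
    rw [if_pos (Finset.mem_insert_of_mem h), Finset.erase_insert_of_ne hxy]
  obtain ⟨d₀, hd₀, hbd₀⟩ := hdel (c + boundary e) (by
    intro A hA
    by_cases h : x ∈ A
    · rw [Pi.add_apply, hbe A h]
      exact CharTwo.add_self_eq_zero _
    · exact (hc.add (heK.boundary hK)) A fun h' => hA ⟨h', h⟩) (by
    rw [boundary_add, hbd, boundary_boundary, add_zero])
  refine ⟨e + d₀, heK.add (hd₀.mono fun A h => h.1), ?_⟩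
  rw [boundary_add, hbd₀, add_left_comm]
  have : boundary e + boundary e = 0 := by ext A; exact CharTwo.add_self_eq_zero _
  rw [this, add_zero]

end ChainComplex

section OrderComplex

variable {α β : Type*} [Fintype α] [DecidableEq α] [Fintype β] [DecidableEq β]

open scoped Classical in
/-- Pull back a chain along a vertex map, keeping only the faces of `K`. -/
noncomputable def pullChain (K : Set (Finset α)) (φ : α → β) (c : Finset β → ZMod 2)
    (A : Finset α) : ZMod 2 :=
  if A ∈ K then c (A.image φ) else 0

lemma boundary_pullChain {K : Set (Finset α)} {K' : Set (Finset β)} (hK : DownClosed K)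
    (φ : α → β) (ψ : β → α) (hφ : ∀ A ∈ K, A.image φ ∈ K') (hψ : ∀ B ∈ K', B.image ψ ∈ K)
    (hψφ : ∀ A ∈ K, ∀ x ∈ A, ψ (φ x) = x) (hφψ : ∀ B ∈ K', ∀ y ∈ B, φ (ψ y) = y)
    (c : Finset β → ZMod 2) (hc : SupportedOn K' c) :
    boundary (pullChain K φ c) = pullChain K φ (boundary c) := by
  classical
  ext A
  by_cases hA : A ∈ K
  swap
  · rw [pullChain, if_neg hA]
    exact Finset.sum_eq_zero fun x _ =>
      if_neg fun h => hA (hK _ h _ (Finset.subset_insert x A))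
  have himg : (A.image φ).image ψ = A := by
    rw [Finset.image_image]
    conv_rhs => rw [← Finset.image_id (s := A)]
    exact Finset.image_congr fun x hx => hψφ A hA x hx
  rw [pullChain, if_pos hA, boundary, boundary]
  simp only [pullChain]
  rw [← Finset.sum_filter]
  rw [← Finset.sum_filter_of_ne (s := (A.image φ)ᶜ) (p := fun y => insert y (A.image φ) ∈ K')
    (fun y _ h => by_contra fun h' => h (hc _ h'))]
  refine Finset.sum_bij' (fun x _ => φ x) (fun y _ => ψ y) ?_ ?_ ?_ ?_ ?_
  · intro x hx
    simp only [Finset.mem_filter, Finset.mem_compl] at hx ⊢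
    refine ⟨?_, ?_⟩
    · intro h
      obtain ⟨x', hx', e⟩ := Finset.mem_image.1 h
      have h1 := hψφ _ hx.2 x (Finset.mem_insert_self _ _)
      have h2 := hψφ _ hA x' hx'
      rw [e, h1] at h2
      exact hx.1 (h2 ▸ hx')
    · rw [← Finset.image_insert]
      exact hφ _ hx.2
  · intro y hy
    simp only [Finset.mem_filter, Finset.mem_compl] at hy ⊢
    refine ⟨fun h => hy.1 ?_, ?_⟩
    · rw [← hφψ _ hy.2 y (Finset.mem_insert_self _ _)]
      exact Finset.mem_image_of_mem _ h
    · have := hψ _ hy.2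
      rwa [Finset.image_insert, himg] at this
  · intro x hx
    exact hψφ _ (Finset.mem_filter.1 hx).2 x (Finset.mem_insert_self _ _)
  · intro y hy
    exact hφψ _ (Finset.mem_filter.1 hy).2 y (Finset.mem_insert_self _ _)
  · intro x _
    rw [Finset.image_insert]

/-- Acyclicity is invariant under isomorphism of complexes. -/
lemma AcyclicFamily.of_iso {K : Set (Finset α)} {K' : Set (Finset β)} (hK : DownClosed K)
    (hK' : DownClosed K') (φ : α → β) (ψ : β → α) (hφ : ∀ A ∈ K, A.image φ ∈ K')
    (hψ : ∀ B ∈ K', B.image ψ ∈ K)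
    (hψφ : ∀ A ∈ K, ∀ x ∈ A, ψ (φ x) = x) (hφψ : ∀ B ∈ K', ∀ y ∈ B, φ (ψ y) = y)
    (h : AcyclicFamily K) : AcyclicFamily K' := by
  classical
  intro c hc hbd
  obtain ⟨d, hd, hbd'⟩ := h (pullChain K φ c) (fun A hA => if_neg hA) (by
    rw [boundary_pullChain hK φ ψ hφ hψ hψφ hφψ c hc, hbd]
    ext A
    simp [pullChain])
  refine ⟨pullChain K' ψ d, fun A hA => if_neg hA, ?_⟩
  rw [boundary_pullChain hK' ψ φ hψ hφ hφψ hψφ d hd, hbd']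
  ext B
  by_cases hB : B ∈ K'
  · have himg : (B.image ψ).image φ = B := by
      rw [Finset.image_image]
      conv_rhs => rw [← Finset.image_id (s := B)]
      exact Finset.image_congr fun x hx => hφψ B hB x hx
    rw [pullChain, if_pos hB, pullChain, if_pos (hψ B hB), himg]
  · rw [pullChain, if_neg hB, hc B hB]

variable [PartialOrder α] [PartialOrder β]

/-- The finite chains contained in a subset of a poset. -/
def chainFamily (S : Set α) : Set (Finset α) :=
  {A | (A : Set α) ⊆ S ∧ IsChain (· ≤ ·) (A : Set α)}

lemma downClosed_chainFamily (S : Set α) : DownClosed (chainFamily S) := fun _ hA _ hB =>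
  ⟨(Finset.coe_subset.2 hB).trans hA.1, hA.2.mono (Finset.coe_subset.2 hB)⟩

lemma acyclicFamily_chainFamily_image [Nonempty α] {S : Set α} (φ : α → β)
    (hφ : ∀ x ∈ S, ∀ y ∈ S, φ x ≤ φ y ↔ x ≤ y) (h : AcyclicFamily (chainFamily S)) :
    AcyclicFamily (chainFamily (φ '' S)) := by
  classical
  have hinj : Set.InjOn φ S := fun x hx y hy e =>
    le_antisymm ((hφ x hx y hy).1 e.le) ((hφ y hy x hx).1 e.ge)
  have hleft : Set.LeftInvOn (Function.invFunOn φ S) φ S := hinj.leftInvOn_invFunOn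
  refine AcyclicFamily.of_iso (downClosed_chainFamily _) (downClosed_chainFamily _) φ
    (Function.invFunOn φ S) ?_ ?_ ?_ ?_ h
  · intro A hA
    refine ⟨by rw [Finset.coe_image]; exact Set.image_mono hA.1, ?_⟩
    rw [Finset.coe_image]
    rintro _ ⟨x, hx, rfl⟩ _ ⟨y, hy, rfl⟩ hxy
    rcases hA.2 hx hy (fun e => hxy (congrArg φ e)) with h' | h'
    · exact Or.inl ((hφ x (hA.1 hx) y (hA.1 hy)).2 h')
    · exact Or.inr ((hφ y (hA.1 hy) x (hA.1 hx)).2 h')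
  · intro B hB
    have hmem : ∀ y ∈ (B : Set β), Function.invFunOn φ S y ∈ S ∧
        φ (Function.invFunOn φ S y) = y := fun y hy =>
      ⟨Function.invFunOn_mem (hB.1 hy), Function.invFunOn_eq (hB.1 hy)⟩
    refine ⟨?_, ?_⟩
    · rw [Finset.coe_image]
      rintro _ ⟨y, hy, rfl⟩
      exact (hmem y hy).1
    · rw [Finset.coe_image]
      rintro _ ⟨x, hx, rfl⟩ _ ⟨y, hy, rfl⟩ hxy
      rcases hB.2 hx hy (fun e => hxy (congrArg _ e)) with h' | h'
      · left
        change _ ≤ _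
        rw [← hφ _ (hmem x hx).1 _ (hmem y hy).1, (hmem x hx).2, (hmem y hy).2]
        exact h'
      · right
        change _ ≤ _
        rw [← hφ _ (hmem y hy).1 _ (hmem x hx).1, (hmem x hx).2, (hmem y hy).2]
        exact h'
  · intro A hA x hx
    exact hleft (hA.1 hx)
  · intro B hB y hy
    exact Function.invFunOn_eq (hB.1 hy)

/-- An element comparable to all of `S` makes the order complex of `S` a cone. -/
lemma acyclicFamily_chainFamily_of_comparable {S : Set α} (y : α) (hy : y ∈ S)
    (hcomp : ∀ x ∈ S, x ≤ y ∨ y ≤ x) : AcyclicFamily (chainFamily S) := by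
  refine acyclicFamily_of_cone y fun A hA => ⟨?_, ?_⟩
  · rw [Finset.coe_insert]
    exact Set.insert_subset hy hA.1
  · rw [Finset.coe_insert]
    exact hA.2.insert fun x hx _ => (hcomp x (hA.1 hx)).symm

lemma acyclicFamily_chainFamily_of_link {S : Set α} (x : α) (hx : x ∈ S)
    (hdel : AcyclicFamily (chainFamily (S \ {x})))
    (hlk : AcyclicFamily (chainFamily {y | y ∈ S ∧ (y < x ∨ x < y)})) :
    AcyclicFamily (chainFamily S) := by
  refine acyclicFamily_of_deletion_link (downClosed_chainFamily S) x ?_ ?_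
  · convert hdel using 1
    ext A
    constructor
    · rintro ⟨hA, hxA⟩
      exact ⟨fun z hz => ⟨hA.1 hz, fun e => hxA (by simpa [Set.mem_singleton_iff.1 e] using hz)⟩,
        hA.2⟩
    · rintro ⟨hA, hc⟩
      exact ⟨⟨fun z hz => (hA hz).1, hc⟩, fun h => (hA (Finset.mem_coe.2 h)).2 rfl⟩
  · convert hlk using 1
    ext A
    constructor
    · rintro ⟨⟨hA, hc⟩, hxA⟩
      rw [Finset.coe_insert] at hA hc
      refine ⟨fun z hz => ⟨hA (Set.mem_insert_of_mem _ hz), ?_⟩, hc.mono (Set.subset_insert _ _)⟩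
      have hne : z ≠ x := fun e => hxA (by simpa [e] using hz)
      rcases hc (Set.mem_insert_of_mem _ hz) (Set.mem_insert x _) hne with h | h
      · exact Or.inl (lt_of_le_of_ne h hne)
      · exact Or.inr (lt_of_le_of_ne h hne.symm)
    · rintro ⟨hA, hc⟩
      refine ⟨⟨?_, ?_⟩, fun h => ?_⟩
      · rw [Finset.coe_insert]
        exact Set.insert_subset hx fun z hz => (hA hz).1
      · rw [Finset.coe_insert]
        refine hc.insert fun z hz _ => ?_
        rcases (hA hz).2 with h | h
        · exact Or.inr h.le
        · exact Or.inl h.le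
      · rcases (hA (Finset.mem_coe.2 h)).2 with h | h <;> exact absurd h (lt_irrefl _)

end OrderComplex

section Nonevasive

variable {ι : Type} [Fintype ι] [DecidableEq ι]

/-- The step of the acyclicity argument: gluing the deletion and the link of a variable. -/
lemma acyclicFamily_nonempty_of_deletion_link {Δ : Set (Finset ι)} (i : ι)
    (hΔ : DownClosed Δ) (hi : {i} ∈ Δ)
    (hdel : AcyclicFamily (chainFamily {A | (A ∈ Δ ∧ i ∉ A) ∧ A ≠ ∅}))
    (hlk : AcyclicFamily (chainFamily {A | (insert i A ∈ Δ ∧ i ∉ A) ∧ A ≠ ∅})) :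
    AcyclicFamily (chainFamily {A | A ∈ Δ ∧ A ≠ ∅}) := by
  classical
  -- the faces containing `i` other than `{i}`
  set D : Finset (Finset ι) := {A | A ∈ Δ ∧ i ∈ A ∧ A ≠ {i}} with hD
  set S₀ : Set (Finset ι) := {A | (A ∈ Δ ∧ i ∉ A) ∧ A ≠ ∅} with hS₀
  have hmemD : ∀ A, A ∈ D ↔ A ∈ Δ ∧ i ∈ A ∧ A ≠ {i} := by simp [hD]
  have key : ∀ m : ℕ, ∀ R : Finset (Finset ι), R.card = m → R ⊆ D →
      (∀ A ∈ R, ∀ B ∈ D, A ⊆ B → B ∈ R) → AcyclicFamily (chainFamily (S₀ ∪ (R : Set _))) := by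
    intro m
    induction m with
    | zero =>
      intro R hR _ _
      rw [Finset.card_eq_zero] at hR
      simpa [hR] using hdel
    | succ m ih =>
      intro R hR hRD hup
      have hne : R.Nonempty := by rw [← Finset.card_pos]; omega
      obtain ⟨x, hxR, hmin⟩ := R.exists_minimal hne
      obtain ⟨hxΔ, hix, hxi⟩ := (hmemD x).1 (hRD hxR)
      refine acyclicFamily_chainFamily_of_link x (Or.inr hxR) ?_ ?_
      · have : (S₀ ∪ (R : Set (Finset ι))) \ {x} = S₀ ∪ ((R.erase x : Finset _) : Set _) := by
          ext A
          simp only [Set.mem_sdiff, Set.mem_union, Finset.mem_coe, Set.mem_singleton_iff,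
            Finset.mem_erase]
          constructor
          · rintro ⟨h | h, h'⟩
            · exact Or.inl h
            · exact Or.inr ⟨h', h⟩
          · rintro (h | h)
            · exact ⟨Or.inl h, by rintro rfl; exact h.1.2 hix⟩
            · exact ⟨Or.inr h.2, h.1⟩
        rw [this]
        refine ih _ (by rw [Finset.card_erase_of_mem hxR, hR]; rfl)
          ((Finset.erase_subset _ _).trans hRD) ?_
        intro A hA B hB hAB
        rw [Finset.mem_erase] at hA ⊢
        refine ⟨?_, hup A hA.2 B hB hAB⟩
        rintro rfl
        exact hA.1 (le_antisymm hAB (hmin hA.2 hAB))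
      · have hxe : x.erase i ≠ ∅ := by
          intro h
          rw [Finset.erase_eq_empty_iff] at h
          rcases h with h | h
          · simp [h] at hix
          · exact hxi h
        refine acyclicFamily_chainFamily_of_comparable (x.erase i) ⟨Or.inl ?_, Or.inl ?_⟩ ?_
        · exact ⟨⟨hΔ _ hxΔ _ (Finset.erase_subset _ _), by simp⟩, hxe⟩
        · exact Finset.erase_ssubset hix
        · rintro A ⟨hA | hA, h | h⟩
          · left
            exact Finset.subset_erase.2 ⟨h.le, hA.1.2⟩
          · exact absurd (h.le hix) hA.1.2
          · exact absurd (hmin hA h.le) (not_le_of_gt h)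
          · exact Or.inr ((Finset.erase_subset _ _).trans h.le)
  have hall := key D.card D rfl subset_rfl (fun A _ B hB _ => hB)
  refine acyclicFamily_chainFamily_of_link {i} ⟨hi, by simp⟩ ?_ ?_
  · convert hall using 2
    ext A
    simp only [Set.mem_sdiff, Set.mem_ofPred_eq, Set.mem_singleton_iff, Set.mem_union, Finset.mem_coe,
      hmemD, hS₀]
    constructor
    · rintro ⟨⟨h1, h2⟩, h3⟩
      by_cases h : i ∈ A
      · exact Or.inr ⟨h1, h, h3⟩
      · exact Or.inl ⟨⟨h1, h⟩, h2⟩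
    · rintro (⟨⟨h1, h2⟩, h3⟩ | ⟨h1, h2, h3⟩)
      · exact ⟨⟨h1, h3⟩, by rintro rfl; simp at h2⟩
      · exact ⟨⟨h1, by rintro rfl; simp at h2⟩, h3⟩
  · have := acyclicFamily_chainFamily_image (insert i) (fun A hA B hB => by
      constructor
      · intro h
        exact (Finset.insert_subset_insert_iff hA.1.2).1 h
      · intro h
        exact Finset.insert_subset_insert i h) hlk
    convert this using 2
    ext A
    simp only [Set.mem_ofPred_eq, Set.mem_image]
    constructor
    · rintro ⟨⟨h1, h2⟩, h | h⟩
      · exact absurd (Finset.ssubset_singleton_iff.1 h) h2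
      · have hiA : i ∈ A := h.le (Finset.mem_singleton_self i)
        refine ⟨A.erase i, ⟨⟨by rwa [Finset.insert_erase hiA], by simp⟩, ?_⟩,
          Finset.insert_erase hiA⟩
        intro he
        rw [Finset.erase_eq_empty_iff] at he
        rcases he with he | he
        · exact h2 he
        · exact h.ne he.symm
    · rintro ⟨B, ⟨⟨h1, h2⟩, h3⟩, rfl⟩
      refine ⟨⟨h1, Finset.insert_ne_empty _ _⟩, Or.inr ?_⟩
      refine lt_of_le_of_ne (by simp) ?_
      intro he
      obtain ⟨b, hb⟩ := Finset.nonempty_iff_ne_empty.2 h3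
      have : b ∈ ({i} : Finset ι) := he ▸ Finset.mem_insert_of_mem hb
      exact h2 (Finset.mem_singleton.1 this ▸ hb)

/-- If a decision tree decides membership in a complex on the variables `U` with fewer than `#U`
queries (the variables in `B` being set to true), then the complex is acyclic. -/
lemma acyclicFamily_of_depth_lt (T : DecisionTree ι) :
    ∀ (B U : Finset ι) (Δ : Set (Finset ι)), Disjoint B U → DownClosed Δ →
      (∀ A ∈ Δ, A ⊆ U) →
      (∀ A ⊆ U, T.eval (fun i => decide (i ∈ A ∪ B)) = true ↔ A ∈ Δ) →
      T.depth < U.card → ∅ ∈ Δ → AcyclicFamily (chainFamily {A | A ∈ Δ ∧ A ≠ ∅}) := by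
  induction T with
  | leaf b =>
    intro B U Δ _ _ hU hT hdepth hempty
    have hb : b = true := (hT ∅ (Finset.empty_subset _)).2 hempty
    refine acyclicFamily_chainFamily_of_comparable U ⟨?_, ?_⟩ fun A hA => Or.inl (hU A hA.1)
    · exact (hT U subset_rfl).1 hb
    · rintro rfl
      simp at hdepth
  | node i t f iht ihf =>
    intro B U Δ hBU hΔ hU hT hdepth hempty
    have hdt : t.depth + 1 < U.card + 0 := lt_of_le_of_lt (by simp [DecisionTree.depth]) hdepth
    have hdf : f.depth + 1 < U.card + 0 := lt_of_le_of_lt (by simp [DecisionTree.depth]) hdepth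
    by_cases hiB : i ∈ B
    · refine iht B U Δ hBU hΔ hU (fun A hA => ?_) (by omega) hempty
      rw [← hT A hA]
      simp [DecisionTree.eval, hiB]
    by_cases hiU : i ∈ U
    swap
    · refine ihf B U Δ hBU hΔ hU (fun A hA => ?_) (by omega) hempty
      rw [← hT A hA]
      have : i ∉ A := fun h => hiU (hA h)
      simp [DecisionTree.eval, hiB, this]
    have hcard : (U.erase i).card + 1 = U.card := Finset.card_erase_add_one hiU
    have hdel := ihf B (U.erase i) {A | A ∈ Δ ∧ i ∉ A}
      (hBU.mono_right (Finset.erase_subset _ _))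
      (fun A hA A' h => ⟨hΔ A hA.1 A' h, fun h' => hA.2 (h h')⟩)
      (fun A hA => Finset.subset_erase.2 ⟨hU A hA.1, hA.2⟩)
      (fun A hA => by
        obtain ⟨hA, hiA⟩ := Finset.subset_erase.1 hA
        have := hT A hA
        simp only [DecisionTree.eval, Finset.mem_union, hiA, hiB, or_self, decide_false,
          Bool.false_eq_true, if_false] at this
        simp only [Finset.mem_union, this, Set.mem_ofPred_eq, hiA, not_false_eq_true, and_true])
      (by omega) ⟨hempty, by simp⟩
    by_cases hi : {i} ∈ Δ
    · refine acyclicFamily_nonempty_of_deletion_link i hΔ hi hdel ?_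
      refine iht (insert i B) (U.erase i) {A | insert i A ∈ Δ ∧ i ∉ A} ?_ ?_ ?_ ?_ (by omega)
        ⟨by simpa using hi, by simp⟩
      · rw [Finset.disjoint_insert_left]
        exact ⟨by simp, hBU.mono_right (Finset.erase_subset _ _)⟩
      · exact fun A hA A' h =>
          ⟨hΔ _ hA.1 _ (Finset.insert_subset_insert i h), fun h' => hA.2 (h h')⟩
      · exact fun A hA => Finset.subset_erase.2
          ⟨(Finset.subset_insert i A).trans (hU _ hA.1), hA.2⟩
      · intro A hA
        obtain ⟨hA, hiA⟩ := Finset.subset_erase.1 hA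
        have := hT (insert i A) (Finset.insert_subset hiU hA)
        simp only [DecisionTree.eval, Finset.mem_union, Finset.mem_insert, true_or, decide_true,
          if_true] at this
        simp only [Set.mem_ofPred_eq, hiA, not_false_eq_true, and_true, ← this, Finset.mem_union,
          Finset.mem_insert]
        have e : ∀ j, (j ∈ A ∨ j = i ∨ j ∈ B) ↔ ((j = i ∨ j ∈ A) ∨ j ∈ B) := fun j => by tauto
        simp only [e]
    · convert hdel using 2
      ext A
      constructor
      · rintro ⟨h1, h2⟩
        exact ⟨⟨h1, fun h => hi (hΔ A h1 _ (by simpa using h))⟩, h2⟩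
      · rintro ⟨h1, h2⟩
        exact ⟨h1.1, h2⟩

end Nonevasive

section Smith

variable {α : Type*} [Fintype α] [DecidableEq α]

/-- The differential `∂ + 1 + σ` on `𝔽₂`-chains attached to an involution `σ` of the vertices. -/
def twistedBoundary (σ : α → α) (c : Finset α → ZMod 2) (A : Finset α) : ZMod 2 :=
  boundary c A + (c A + c (A.image σ))

lemma twistedBoundary_add (σ : α → α) (c d : Finset α → ZMod 2) :
    twistedBoundary σ (c + d) = twistedBoundary σ c + twistedBoundary σ d := by
  ext A
  simp only [twistedBoundary, boundary_add, Pi.add_apply]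
  ring

lemma image_image_of_involutive {σ : α → α} (hσ : Function.Involutive σ) (A : Finset α) :
    (A.image σ).image σ = A := by
  rw [Finset.image_image, hσ.comp_self, Finset.image_id]

lemma boundary_comp_image {σ : α → α} (hσ : Function.Involutive σ) (c : Finset α → ZMod 2)
    (A : Finset α) : boundary (fun B => c (B.image σ)) A = boundary c (A.image σ) := by
  simp only [boundary, Finset.image_insert]
  refine Finset.sum_bij' (fun x _ => σ x) (fun x _ => σ x) ?_ ?_ ?_ ?_ ?_
  · intro x hx
    simp only [Finset.mem_compl, Finset.mem_image, not_exists, not_and] at hx ⊢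
    intro y hy e
    exact hx (hσ.injective e ▸ hy)
  · intro x hx
    simp only [Finset.mem_compl, Finset.mem_image, not_exists, not_and] at hx ⊢
    intro h
    exact hx _ h (hσ x)
  · exact fun x _ => hσ x
  · exact fun x _ => hσ x
  · exact fun x _ => rfl

lemma twistedBoundary_twistedBoundary {σ : α → α} (hσ : Function.Involutive σ)
    (c : Finset α → ZMod 2) : twistedBoundary σ (twistedBoundary σ c) = 0 := by
  ext A
  have h0 : twistedBoundary σ c = boundary c + (c + fun B => c (B.image σ)) := rfl
  have h1 : boundary (twistedBoundary σ c) A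
      = boundary c A + boundary c (A.image σ) := by
    rw [h0, boundary_add, boundary_add, boundary_boundary]
    simp only [Pi.add_apply, Pi.zero_apply, zero_add, boundary_comp_image hσ]
  rw [twistedBoundary, h1]
  simp only [twistedBoundary, image_image_of_involutive hσ, Pi.zero_apply]
  have h2 : ∀ a : ZMod 2, a + a = 0 := CharTwo.add_self_eq_zero
  linear_combination h2 (boundary c A) + h2 (boundary c (A.image σ)) + h2 (c A)
    + h2 (c (A.image σ))

lemma SupportedOn.twistedBoundary {K : Set (Finset α)} (hK : DownClosed K) {σ : α → α}
    (hσ : Function.Involutive σ) (hKσ : ∀ A ∈ K, A.image σ ∈ K) {c : Finset α → ZMod 2}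
    (hc : SupportedOn K c) : SupportedOn K (twistedBoundary σ c) := fun A hA => by
  have : A.image σ ∉ K := fun h => hA (by
    simpa [image_image_of_involutive hσ] using hKσ _ h)
  simp [_root_.twistedBoundary, hc A hA, hc _ this, hc.boundary hK A hA]

/-- The part of a chain in a fixed degree. -/
def homogeneousPart (m : ℕ) (c : Finset α → ZMod 2) (A : Finset α) : ZMod 2 :=
  if A.card = m then c A else 0

lemma SupportedOn.homogeneousPart {K : Set (Finset α)} {c : Finset α → ZMod 2}
    (hc : SupportedOn K c) (m : ℕ) : SupportedOn K (homogeneousPart m c) := fun A hA => by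
  simp [_root_.homogeneousPart, hc A hA]

lemma boundary_homogeneousPart (m : ℕ) (c : Finset α → ZMod 2) :
    boundary (homogeneousPart (m + 1) c) = homogeneousPart m (boundary c) := by
  ext A
  simp only [boundary, homogeneousPart]
  have h : ∀ x ∈ Aᶜ, (if (insert x A).card = m + 1 then c (insert x A) else 0) =
      if A.card = m then c (insert x A) else 0 := fun x hx => by
    rw [Finset.card_insert_of_notMem (Finset.mem_compl.1 hx)]
    simp
  rw [Finset.sum_congr rfl h]
  split_ifs <;> simp

lemma exists_twistedBoundary_eq {K : Set (Finset α)} (hK : DownClosed K) {σ : α → α}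
    (hσ : Function.Involutive σ) (hKσ : ∀ A ∈ K, A.image σ ∈ K) (hacyc : AcyclicFamily K)
    (v : Finset α → ZMod 2) (hv : SupportedOn K v) (hDv : twistedBoundary σ v = 0) :
    ∃ y, SupportedOn K y ∧ twistedBoundary σ y = v := by
  have hcard : ∀ A : Finset α, (A.image σ).card = A.card := fun A =>
    Finset.card_image_of_injective _ hσ.injective
  suffices H : ∀ k m : ℕ, m + k = Fintype.card α + 1 → ∀ v, SupportedOn K v →
      twistedBoundary σ v = 0 → (∀ A, A.card < m → v A = 0) →
      ∃ y, SupportedOn K y ∧ twistedBoundary σ y = v from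
    H (Fintype.card α + 1) 0 (by simp) v hv hDv (by simp)
  intro k
  induction k with
  | zero =>
    intro m hm v _ _ hv0
    have : v = 0 := by
      ext A
      exact hv0 A (by have := Finset.card_le_univ A; omega)
    exact ⟨0, fun _ _ => rfl, by ext A; simp [twistedBoundary, boundary, this]⟩
  | succ k ih =>
    intro m hm v hv hDv hv0
    have hbd : boundary (homogeneousPart m v) = 0 := by
      rcases Nat.eq_zero_or_pos m with rfl | hmpos
      · ext A
        refine Finset.sum_eq_zero fun x hx => ?_
        rw [homogeneousPart, if_neg]
        rw [Finset.card_insert_of_notMem (Finset.mem_compl.1 hx)]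
        omega
      · obtain ⟨m, rfl⟩ : ∃ m', m = m' + 1 := ⟨m - 1, by omega⟩
        rw [boundary_homogeneousPart]
        ext A
        rw [homogeneousPart]
        split_ifs with h
        · have := congrFun hDv A
          rw [twistedBoundary, hv0 A (by omega), hv0 _ (by rw [hcard]; omega)] at this
          simpa using this
        · rfl
    obtain ⟨y, hy, hby⟩ := hacyc _ (hv.homogeneousPart m) hbd
    set y' := homogeneousPart (m + 1) y with hy'
    have hby' : boundary y' = homogeneousPart m v := by
      rw [hy', boundary_homogeneousPart, hby]
      ext A
      simp only [homogeneousPart]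
      split_ifs <;> rfl
    have hy'K : SupportedOn K y' := hy.homogeneousPart _
    obtain ⟨z, hz, hDz⟩ := ih (m + 1) (by omega) (v + twistedBoundary σ y')
      (hv.add (hy'K.twistedBoundary hK hσ hKσ))
      (by rw [twistedBoundary_add, hDv, twistedBoundary_twistedBoundary hσ, add_zero])
      (by
        intro A hA
        have h1 : y' A = 0 := if_neg (by omega)
        have h2 : y' (A.image σ) = 0 := if_neg (by rw [hcard]; omega)
        rw [Pi.add_apply, twistedBoundary, hby', h1, h2, homogeneousPart]
        split_ifs with h
        · simp [CharTwo.add_self_eq_zero]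
        · simp [hv0 A (by omega)])
    refine ⟨y' + z, hy'K.add hz, ?_⟩
    rw [twistedBoundary_add, hDz]
    ext A
    simp only [Pi.add_apply]
    linear_combination (CharTwo.add_self_eq_zero (twistedBoundary σ y' A))

/-- Modulo the chains on the fixed faces, the twisted complex is exact. -/
lemma exists_eq_twistedBoundary_add {K : Set (Finset α)} {σ : α → α} (hK : DownClosed K)
    (hσ : Function.Involutive σ) (hKσ : ∀ A ∈ K, A.image σ ∈ K)
    (hreg : ∀ A ∈ K, A.image σ = A → ∀ x ∈ A, σ x = x)
    (v : Finset α → ZMod 2) (hv : SupportedOn K v)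
    (hDv : SupportedOn {A | A ∈ K ∧ ∀ x ∈ A, σ x = x} (twistedBoundary σ v)) :
    ∃ y w, SupportedOn K y ∧ SupportedOn {A | A ∈ K ∧ ∀ x ∈ A, σ x = x} w ∧
      v = twistedBoundary σ y + w := by
  set L : Set (Finset α) := {A | A ∈ K ∧ ∀ x ∈ A, σ x = x} with hL
  have hcard : ∀ A : Finset α, (A.image σ).card = A.card := fun A =>
    Finset.card_image_of_injective _ hσ.injective
  have hLK : L ⊆ K := fun A h => h.1
  have hLd : DownClosed L := fun A hA B hB => ⟨hK A hA.1 B hB, fun x hx => hA.2 x (hB hx)⟩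
  suffices H : ∀ m : ℕ, ∀ v, SupportedOn K v → SupportedOn L (twistedBoundary σ v) →
      (∀ A, A ∉ L → m ≤ A.card → v A = 0) →
      ∃ y w, SupportedOn K y ∧ SupportedOn L w ∧ v = twistedBoundary σ y + w from
    H (Fintype.card α + 1) v hv hDv fun A _ h => by
      have := Finset.card_le_univ A; omega
  intro m
  induction m with
  | zero =>
    intro v _ _ hv0
    exact ⟨0, v, fun _ _ => rfl, fun A hA => hv0 A hA (by omega), by
      ext A; simp [twistedBoundary, boundary]⟩
  | succ m ih =>
    intro v hv hDv hv0
    classical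
    let e := Fintype.equivFin (Finset α)
    set y : Finset α → ZMod 2 := fun A =>
      if A ∉ L ∧ A.card = m ∧ e A < e (A.image σ) then v A else 0 with hy
    have hyK : SupportedOn K y := fun A hA => by simp [hy, hv A hA]
    have hLσ : ∀ A, A ∉ L → A.image σ ∉ L := by
      intro A hA h
      apply hA
      have h1 : A ∈ K := by simpa [image_image_of_involutive hσ] using hKσ _ h.1
      refine ⟨h1, fun x hx => ?_⟩
      have := h.2 (σ x) (Finset.mem_image_of_mem _ hx)
      rw [hσ] at this
      exact this.symm
    have hyb : ∀ A, A ∉ L → m ≤ A.card → boundary y A = 0 := by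
      intro A _ hm
      refine Finset.sum_eq_zero fun x hx => if_neg ?_
      rintro ⟨-, h, -⟩
      rw [Finset.card_insert_of_notMem (Finset.mem_compl.1 hx)] at h
      omega
    have hvb : ∀ A, A ∉ L → m ≤ A.card → boundary v A = 0 := by
      intro A hA hm
      refine Finset.sum_eq_zero fun x hx => hv0 _ (fun h => ?_) ?_
      · exact hA (hLd _ h _ (Finset.subset_insert _ _))
      · rw [Finset.card_insert_of_notMem (Finset.mem_compl.1 hx)]
        omega
    have hsym : ∀ A, A ∉ L → A.card = m → v A = v (A.image σ) := by
      intro A hA hm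
      have := hDv A hA
      rw [twistedBoundary, hvb A hA hm.ge, zero_add] at this
      exact CharTwo.add_eq_zero.1 this
    have hyy : ∀ A, A ∉ L → A.card = m → y A + y (A.image σ) = v A := by
      intro A hA hm
      by_cases hAK : A ∈ K
      swap
      · have h2 : A.image σ ∉ K := fun h => hAK (by
          simpa [image_image_of_involutive hσ] using hKσ _ h)
        rw [hyK A hAK, hyK _ h2, hv A hAK, add_zero]
      have hne : A.image σ ≠ A := fun h => hA ⟨hAK, hreg A hAK h⟩
      have hne' : e A ≠ e (A.image σ) := fun h => hne (e.injective h).symm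
      simp only [hy, image_image_of_involutive hσ, hcard, hm, hA, hLσ A hA, not_false_eq_true,
        true_and]
      rcases lt_or_gt_of_ne hne' with h | h
      · rw [if_pos h, if_neg (lt_asymm h), add_zero]
      · rw [if_neg (lt_asymm h), if_pos h, zero_add, ← hsym A hA hm]
    obtain ⟨z, w, hz, hw, hvz⟩ := ih (v + twistedBoundary σ y)
      (hv.add (hyK.twistedBoundary hK hσ hKσ))
      (by rwa [twistedBoundary_add, twistedBoundary_twistedBoundary hσ, add_zero])
      (by
        intro A hA hm
        rw [Pi.add_apply, twistedBoundary, hyb A hA hm, zero_add]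
        rcases hm.eq_or_lt with h | h
        · rw [hyy A hA h.symm]
          exact CharTwo.add_self_eq_zero _
        · have h1 : y A = 0 := if_neg (by omega)
          have h2 : y (A.image σ) = 0 := if_neg (by rw [hcard]; omega)
          rw [h1, h2, hv0 A hA h]
          simp)
    refine ⟨y + z, w, hyK.add hz, hw, ?_⟩
    rw [twistedBoundary_add, add_assoc, ← hvz]
    ext A
    simp only [Pi.add_apply]
    linear_combination -(CharTwo.add_self_eq_zero (twistedBoundary σ y A))

/-- Smith theory: the fixed faces of a regular involution on an acyclic complex form an acyclic
complex. -/
lemma AcyclicFamily.fixed {K : Set (Finset α)} {σ : α → α} (hK : DownClosed K)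
    (hσ : Function.Involutive σ) (hKσ : ∀ A ∈ K, A.image σ ∈ K)
    (hreg : ∀ A ∈ K, A.image σ = A → ∀ x ∈ A, σ x = x) (hacyc : AcyclicFamily K) :
    AcyclicFamily {A | A ∈ K ∧ ∀ x ∈ A, σ x = x} := by
  set L : Set (Finset α) := {A | A ∈ K ∧ ∀ x ∈ A, σ x = x} with hL
  have hLK : L ⊆ K := fun A h => h.1
  have htw : ∀ w, SupportedOn L w → twistedBoundary σ w = boundary w := by
    intro w hw
    ext A
    have : w (A.image σ) = w A := by
      by_cases hA : A ∈ L
      · congr 1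
        conv_rhs => rw [← Finset.image_id (s := A)]
        exact Finset.image_congr fun x hx => hA.2 x hx
      · have hA' : A.image σ ∉ L := by
          intro h
          apply hA
          have h1 : A ∈ K := by simpa [image_image_of_involutive hσ] using hKσ _ h.1
          refine ⟨h1, fun x hx => ?_⟩
          have := h.2 (σ x) (Finset.mem_image_of_mem _ hx)
          rw [hσ] at this
          exact this.symm
        rw [hw A hA, hw _ hA']
    rw [twistedBoundary, this, CharTwo.add_self_eq_zero, add_zero]
  intro c hc hbd
  obtain ⟨v, hv, hDv⟩ := exists_twistedBoundary_eq hK hσ hKσ hacyc c (hc.mono hLK)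
    ((htw c hc).trans hbd)
  obtain ⟨y, w, -, hw, hvw⟩ := exists_eq_twistedBoundary_add hK hσ hKσ hreg v hv
    (by rw [hDv]; exact hc)
  refine ⟨w, hw, ?_⟩
  rw [← htw w hw, ← hDv, hvw, twistedBoundary_add, twistedBoundary_twistedBoundary hσ, zero_add]

variable [PartialOrder α]

lemma AcyclicFamily.chainFamily_fixed {S : Set α} (σ : α → α) (hmono : Monotone σ)
    (hσ : Function.Involutive σ) (hS : ∀ x ∈ S, σ x ∈ S)
    (h : AcyclicFamily (chainFamily S)) :
    AcyclicFamily (chainFamily {x | x ∈ S ∧ σ x = x}) := by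
  have := h.fixed (σ := σ) (downClosed_chainFamily S) hσ ?_ ?_
  · convert this using 1
    ext A
    constructor
    · rintro ⟨h1, h2⟩
      exact ⟨⟨fun x hx => (h1 hx).1, h2⟩, fun x hx => (h1 (Finset.mem_coe.2 hx)).2⟩
    · rintro ⟨⟨h1, h2⟩, h3⟩
      exact ⟨fun x hx => ⟨h1 hx, h3 x hx⟩, h2⟩
  · rintro A ⟨h1, h2⟩
    refine ⟨?_, ?_⟩
    · rw [Finset.coe_image]
      rintro _ ⟨x, hx, rfl⟩
      exact hS x (h1 hx)
    · rw [Finset.coe_image]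
      exact hmono.isChain_image h2
  · rintro A ⟨h1, h2⟩ hA x hx
    have hx' : σ x ∈ A := hA ▸ Finset.mem_image_of_mem σ hx
    rcases h2.total (Finset.mem_coe.2 hx) (Finset.mem_coe.2 hx') with h | h
    · exact le_antisymm (by simpa [hσ x] using hmono h) h
    · exact le_antisymm h (by simpa [hσ x] using hmono h)

/-- Smith theory for a finite set of commuting involutions. -/
lemma AcyclicFamily.chainFamily_fixed_finset {S : Set α} (P : Finset (α → α))
    (hmono : ∀ σ ∈ P, Monotone σ) (hσ : ∀ σ ∈ P, Function.Involutive σ)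
    (hcomm : ∀ σ ∈ P, ∀ τ ∈ P, ∀ x, σ (τ x) = τ (σ x)) (hS : ∀ σ ∈ P, ∀ x ∈ S, σ x ∈ S)
    (h : AcyclicFamily (chainFamily S)) :
    AcyclicFamily (chainFamily {x | x ∈ S ∧ ∀ σ ∈ P, σ x = x}) := by
  classical
  induction P using Finset.induction_on with
  | empty => simpa using h
  | insert τ P _ ih =>
    have ih' := ih (fun σ h => hmono σ (Finset.mem_insert_of_mem h))
      (fun σ h => hσ σ (Finset.mem_insert_of_mem h))
      (fun σ h σ' h' => hcomm σ (Finset.mem_insert_of_mem h) σ' (Finset.mem_insert_of_mem h'))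
      (fun σ h => hS σ (Finset.mem_insert_of_mem h))
    have hτ := Finset.mem_insert_self τ P
    have hstab : ∀ x ∈ {x | x ∈ S ∧ ∀ σ ∈ P, σ x = x}, τ x ∈ {x | x ∈ S ∧ ∀ σ ∈ P, σ x = x} :=
      fun x hx => ⟨hS τ hτ x hx.1,
        fun σ h => by rw [hcomm σ (Finset.mem_insert_of_mem h) τ hτ, hx.2 σ h]⟩
    have := ih'.chainFamily_fixed τ (hmono τ hτ) (hσ τ hτ) hstab
    convert this using 2
    ext x
    simp only [Finset.mem_insert, forall_eq_or_imp, Set.mem_ofPred_eq]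
    tauto

end Smith

section LefschetzTrace

open LinearMap in
/-- An endomorphism commuting with an exact differential has zero trace in characteristic two. -/
lemma trace_eq_zero_of_commute_exact {k V : Type*} [Field k] [CharP k 2] [AddCommGroup V]
    [Module k V] [Module.Finite k V] (D g : V →ₗ[k] V) (hex : ker D = range D)
    (hc : g ∘ₗ D = D ∘ₗ g) : LinearMap.trace k V g = 0 := by
  obtain ⟨r, hr⟩ := D.rangeRestrict.exists_rightInverse_of_surjective (range_rangeRestrict D)
  have hDD : ∀ x, D (D x) = 0 := fun x => by
    have : D x ∈ ker D := hex ▸ mem_range_self D x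
    exact this
  have hDr : ∀ y : range D, D (r y) = y := fun y => by
    have := congrArg (fun f => ((f y : range D) : V)) hr
    simpa using this
  let e : V →ₗ[k] V := r ∘ₗ D.rangeRestrict
  have he : ∀ x, D (e x) = D x := fun x => hDr _
  have hmem : ∀ x, x - e x ∈ range D := fun x => by
    rw [← hex, mem_ker, map_sub, he, sub_self]
  let s : V →ₗ[k] V := r ∘ₗ (LinearMap.codRestrict (range D) (LinearMap.id - e) hmem)
  have hs : ∀ x, D (s x) + s (D x) = x := fun x => by
    have h1 : D (s x) = x - e x := hDr ⟨_, hmem x⟩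
    have h3 : e (D x) = 0 := by
      have h4 : D.rangeRestrict (D x) = 0 := Subtype.ext (hDD x)
      simp [e, h4]
    have h2 : s (D x) = e x := by
      simp only [s, e, comp_apply]
      congr 1
      apply Subtype.ext
      change D x - e (D x) = D x
      rw [h3, sub_zero]
    rw [h1, h2, sub_add_cancel]
  have hg : g = (g ∘ₗ s) * D + D * (g ∘ₗ s) := by
    ext x
    have h5 : D (g (s x)) = g (D (s x)) := (LinearMap.congr_fun hc (s x)).symm
    simp only [LinearMap.add_apply, Module.End.mul_apply, comp_apply, h5, ← map_add]
    rw [add_comm, hs]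
  rw [hg, map_add, LinearMap.trace_mul_comm, CharTwo.add_self_eq_zero]

lemma trace_funLeft {k X : Type*} [Field k] [Fintype X] [DecidableEq X] (e : X → X) :
    LinearMap.trace k (X → k) (LinearMap.funLeft k k e) =
      ((Finset.univ.filter fun x => e x = x).card : k) := by
  rw [LinearMap.trace_eq_matrix_trace k (Pi.basisFun k X), Matrix.trace]
  simp [LinearMap.funLeft_apply, Pi.single_apply]

variable {α : Type*} [Fintype α] [DecidableEq α]

open Classical in
lemma even_card_fixed_of_acyclicFamily {K : Set (Finset α)} (hK : DownClosed K)
    (hacyc : AcyclicFamily K) (g : α ≃ α) (hg : ∀ A, A.image g ∈ K ↔ A ∈ K) :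
    Even (Finset.univ.filter fun A : Finset α => A ∈ K ∧ A.image g = A).card := by
  let ext0 : (K → ZMod 2) → Finset α → ZMod 2 := fun c A => if h : A ∈ K then c ⟨A, h⟩ else 0
  have hsupp : ∀ c, SupportedOn K (ext0 c) := fun c A hA => by simp [ext0, hA]
  have hext : ∀ d, SupportedOn K d → ext0 (fun A => d A) = d := fun d hd => by
    ext A
    by_cases h : A ∈ K <;> simp [ext0, h, hd A]
  have hval : ∀ c (A : K), ext0 c A = c A := fun c A => by simp [ext0]
  let D : (K → ZMod 2) →ₗ[ZMod 2] (K → ZMod 2) :=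
    { toFun := fun c A => boundary (ext0 c) A
      map_add' := fun c d => by
        have : ext0 (c + d) = ext0 c + ext0 d := by
          ext A; by_cases h : A ∈ K <;> simp [ext0, h]
        ext A
        simp [this, boundary_add]
      map_smul' := fun r c => by
        have : ext0 (r • c) = r • ext0 c := by
          ext A; by_cases h : A ∈ K <;> simp [ext0, h]
        ext A
        simp [this, boundary_smul] }
  have hD : ∀ c, ext0 (D c) = boundary (ext0 c) := fun c => hext _ ((hsupp c).boundary hK)
  have hinj : ∀ c d, ext0 c = ext0 d → c = d := fun c d h => by
    ext A
    rw [← hval c A, h, hval]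
  have hzero : ext0 0 = 0 := by ext A; simp [ext0]
  let e : K → K := fun A => ⟨A.1.image g, (hg _).2 A.2⟩
  have hex : LinearMap.ker D = LinearMap.range D := by
    ext c
    rw [LinearMap.mem_ker, LinearMap.mem_range]
    constructor
    · intro h
      obtain ⟨d, hd, hdc⟩ := hacyc (ext0 c) (hsupp c) (by rw [← hD, h, hzero])
      refine ⟨fun A => d A, hinj _ _ ?_⟩
      rw [hD, hext d hd, hdc]
    · rintro ⟨d, rfl⟩
      apply hinj
      rw [hD, hD, boundary_boundary, hzero]
  have hcomm : LinearMap.funLeft (ZMod 2) (ZMod 2) e ∘ₗ D =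
      D ∘ₗ LinearMap.funLeft (ZMod 2) (ZMod 2) e := by
    apply LinearMap.ext
    intro c
    ext A
    have hA : ∀ A, ext0 (LinearMap.funLeft (ZMod 2) (ZMod 2) e c) A = ext0 c (A.image g) := by
      intro A
      by_cases h : A ∈ K
      · have h' := (hg A).2 h
        simp [ext0, h, h', LinearMap.funLeft_apply, e]
      · have h' : A.image g ∉ K := fun h'' => h ((hg A).1 h'')
        rw [hsupp _ A h, hsupp _ _ h']
    change boundary (ext0 c) (A.1.image g) = boundary (ext0 _) A.1
    simp only [boundary, hA, Finset.image_insert]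
    symm
    refine Finset.sum_bij (fun x _ => g x) ?_ ?_ ?_ ?_
    · intro x hx
      simpa using hx
    · intro x _ y _ h
      exact g.injective h
    · intro y hy
      refine ⟨g.symm y, ?_, by simp⟩
      rw [Finset.mem_compl] at hy ⊢
      exact fun h => hy (Finset.mem_image.2 ⟨_, h, by simp⟩)
    · intros; rfl
  have htr := trace_eq_zero_of_commute_exact D _ hex hcomm
  rw [trace_funLeft, ZMod.natCast_eq_zero_iff] at htr
  rw [even_iff_two_dvd]
  refine htr.trans (dvd_of_eq ?_)
  refine Finset.card_bij (fun A _ => A.1) ?_ ?_ ?_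
  · intro A hA
    simpa [e, Subtype.ext_iff] using hA
  · intro A _ B _ h
    exact Subtype.ext h
  · intro A hA
    simp only [Finset.mem_filter, Finset.mem_univ, true_and] at hA
    exact ⟨⟨A, hA.1⟩, by simpa [e, Subtype.ext_iff] using hA.2, rfl⟩

variable [PartialOrder α]

open Classical in
lemma even_card_chainFamily_fixed {S : Set α} (h : AcyclicFamily (chainFamily S)) (g : α ≃o α)
    (hS : ∀ x, g x ∈ S ↔ x ∈ S) :
    Even (Finset.univ.filter fun A => A ∈ chainFamily {x | x ∈ S ∧ g x = x}).card := by
  have key := even_card_fixed_of_acyclicFamily (downClosed_chainFamily S) h g.toEquiv ?_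
  · convert key using 2
    ext A
    simp only [Finset.mem_filter, Finset.mem_univ, true_and]
    constructor
    · rintro ⟨h1, h2⟩
      refine ⟨⟨fun x hx => (h1 hx).1, h2⟩, ?_⟩
      have : ∀ x ∈ A, g x = x := fun x hx => (h1 (Finset.mem_coe.2 hx)).2
      ext y
      simp only [Finset.mem_image]
      constructor
      · rintro ⟨x, hx, rfl⟩
        change g x ∈ A
        rwa [this x hx]
      · intro hy
        exact ⟨y, hy, this y hy⟩
    · rintro ⟨⟨h1, h2⟩, h3⟩
      refine ⟨fun x hx => ⟨h1 hx, ?_⟩, h2⟩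
      have hx' : g x ∈ A := h3 ▸ Finset.mem_image_of_mem g (Finset.mem_coe.1 hx)
      have hord : ∀ n, g^[n] = ⇑((g.toEquiv : Equiv.Perm α) ^ n) := fun n => by
        rw [Equiv.Perm.coe_pow]; rfl
      obtain ⟨n, hn, hgn⟩ := isOfFinOrder_iff_pow_eq_one.1
        (isOfFinOrder_of_finite (g.toEquiv : Equiv.Perm α))
      have hid : g^[n] x = x := by rw [hord, hgn]; rfl
      obtain ⟨m, rfl⟩ := Nat.exists_eq_succ_of_ne_zero hn.ne'
      rcases h2.total hx (Finset.mem_coe.2 hx') with hle | hle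
      · refine le_antisymm ?_ hle
        have hmono := g.monotone.monotone_iterate_of_le_map hle (Nat.le_add_left 1 m)
        simp only [← Nat.succ_eq_add_one, hid] at hmono
        simpa using hmono
      · refine le_antisymm hle ?_
        have hmono := g.monotone.antitone_iterate_of_map_le hle (Nat.le_add_left 1 m)
        simp only [← Nat.succ_eq_add_one, hid] at hmono
        simpa using hmono
  · intro A
    have himg : ((A.image g.toEquiv : Finset α) : Set α) = g '' A := by simp
    have hchain : IsChain (· ≤ ·) (g '' (A : Set α)) ↔ IsChain (· ≤ ·) (A : Set α) := by
      constructor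
      · intro hc x hx y hy hxy
        have := hc ⟨x, hx, rfl⟩ ⟨y, hy, rfl⟩ (fun h => hxy (g.injective h))
        simpa using this
      · exact fun hc => g.monotone.isChain_image hc
    have hsub : g '' (A : Set α) ⊆ S ↔ (A : Set α) ⊆ S := by
      rw [Set.image_subset_iff]
      exact ⟨fun h x hx => (hS x).1 (h hx), fun h x hx => (hS x).2 (h hx)⟩
    simp only [chainFamily, Set.mem_ofPred_eq, himg, hchain, hsub]

end LefschetzTrace

section ChainParity

open Classical in
/-- The number of chains contained in `X`. -/
noncomputable def chainCount {α : Type*} [Fintype α] [PartialOrder α] (X : Finset α) : ℕ :=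
  (Finset.univ.filter fun A : Finset α => A ⊆ X ∧ IsChain (· ≤ ·) (A : Set α)).card

open Classical in
lemma chainCount_eq_add {α : Type*} [Fintype α] [PartialOrder α] {X : Finset α} {x : α}
    (hx : x ∈ X) (hmax : ∀ y ∈ X, x ≤ y → y = x) :
    chainCount X = chainCount (X.erase x) + chainCount (X.filter (· < x)) := by
  unfold chainCount
  rw [← Finset.card_filter_add_card_filter_not (s := Finset.univ.filter
    fun A : Finset α => A ⊆ X ∧ IsChain (· ≤ ·) (A : Set α)) (fun A => x ∉ A)]
  congr 1
  · congr 1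
    ext A
    simp only [Finset.mem_filter, Finset.mem_univ, true_and, Finset.subset_erase]
    tauto
  · symm
    refine Finset.card_bij (fun A _ => insert x A) ?_ ?_ ?_
    · intro A hA
      simp only [Finset.mem_filter, Finset.mem_univ, true_and, not_not] at hA ⊢
      refine ⟨⟨?_, ?_⟩, Finset.mem_insert_self _ _⟩
      · intro y hy
        rcases Finset.mem_insert.1 hy with rfl | hy
        · exact hx
        · exact (Finset.mem_filter.1 (hA.1 hy)).1
      · rw [Finset.coe_insert]
        exact hA.2.insert fun y hy _ => Or.inr (Finset.mem_filter.1 (hA.1 hy)).2.le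
    · intro A hA B hB h
      simp only [Finset.mem_filter, Finset.mem_univ, true_and] at hA hB
      have hxA : x ∉ A := fun h => lt_irrefl x (Finset.mem_filter.1 (hA.1 h)).2
      have hxB : x ∉ B := fun h => lt_irrefl x (Finset.mem_filter.1 (hB.1 h)).2
      rw [← Finset.erase_insert hxA, h, Finset.erase_insert hxB]
    · intro A hA
      simp only [Finset.mem_filter, Finset.mem_univ, true_and, not_not] at hA
      refine ⟨A.erase x, ?_, Finset.insert_erase hA.2⟩
      simp only [Finset.mem_filter, Finset.mem_univ, true_and]
      refine ⟨fun y hy => ?_, hA.1.2.mono (by simp)⟩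
      obtain ⟨hne, hy⟩ := Finset.mem_erase.1 hy
      refine Finset.mem_filter.2 ⟨hA.1.1 hy, lt_of_le_of_ne ?_ hne⟩
      rcases hA.1.2.total (Finset.mem_coe.2 hy) (Finset.mem_coe.2 hA.2) with h | h
      · exact h
      · exact (hmax y (hA.1.1 hy) h).le

open Classical in
lemma even_card_of_sdiff_mem {α : Type*} [Fintype α] [GeneralizedBooleanAlgebra α] (Y : Set α)
    (hsd : ∀ x ∈ Y, ∀ y ∈ Y, y ≤ x → x \ y ∈ Y) {x : α} (hx : x ∈ Y) :
    Even (Finset.univ.filter fun y => y ∈ Y ∧ y ≠ ⊥ ∧ y < x).card := by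
  rw [even_iff_two_dvd, ← ZMod.natCast_eq_zero_iff, Finset.cast_card]
  refine Finset.sum_involution (fun y _ => x \ y) ?_ ?_ ?_ ?_
  · intros
    exact CharTwo.add_self_eq_zero _
  · intro y hy _ h
    simp only [Finset.mem_filter, Finset.mem_univ, true_and] at hy
    apply hy.2.1
    have := (disjoint_sdiff_self_left : Disjoint (x \ y) y)
    rwa [h, disjoint_self] at this
  · intro y hy
    simp only [Finset.mem_filter, Finset.mem_univ, true_and] at hy ⊢
    refine ⟨hsd x hx y hy.1 hy.2.2.le, fun h => ?_, lt_of_le_of_ne sdiff_le fun h => ?_⟩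
    · exact hy.2.2.not_ge (sdiff_eq_bot_iff.1 h)
    · have := (disjoint_sdiff_self_left : Disjoint (x \ y) y)
      rw [h] at this
      exact hy.2.1 (disjoint_self.1 (this.mono_left hy.2.2.le))
  · intro y hy
    simp only [Finset.mem_filter, Finset.mem_univ, true_and] at hy
    exact sdiff_sdiff_eq_self hy.2.2.le

open Classical in
lemma chainCount_add_card_odd {α : Type*} [Fintype α] [GeneralizedBooleanAlgebra α] (Y : Set α)
    (hsd : ∀ x ∈ Y, ∀ y ∈ Y, y ≤ x → x \ y ∈ Y) (X : Finset α)
    (hXY : ∀ x ∈ X, x ∈ Y ∧ x ≠ ⊥) (hX : ∀ x ∈ X, ∀ y ∈ Y, y ≠ ⊥ → y ≤ x → y ∈ X) :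
    Odd (chainCount X + X.card) := by
  induction X using Finset.strongInduction with
  | H X ih =>
    rcases X.eq_empty_or_nonempty with rfl | hne
    · have : chainCount (∅ : Finset α) = 1 := by
        rw [chainCount, Finset.card_eq_one]
        refine ⟨∅, ?_⟩
        ext A
        simp only [Finset.subset_empty, Finset.mem_filter, Finset.mem_univ, true_and,
          Finset.mem_singleton, and_iff_left_iff_imp]
        rintro rfl
        simp
      simp [this]
    · obtain ⟨x, hx⟩ := X.exists_maximal hne
      have hmax : ∀ y ∈ X, x ≤ y → y = x := fun y hy h => le_antisymm (hx.2 hy h) h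
      have h1 := ih (X.erase x) (Finset.erase_ssubset hx.1)
        (fun y hy => hXY y (Finset.mem_of_mem_erase hy)) fun z hz y hy hb hyz => by
          refine Finset.mem_erase.2 ⟨fun h => ?_, hX z (Finset.mem_of_mem_erase hz) y hy hb hyz⟩
          subst h
          exact Finset.ne_of_mem_erase hz (hmax z (Finset.mem_of_mem_erase hz) hyz)
      have h2 := ih (X.filter (· < x))
        (Finset.filter_ssubset.2 ⟨x, hx.1, lt_irrefl x⟩)
        (fun y hy => hXY y (Finset.mem_filter.1 hy).1) fun z hz y hy hb hyz => by
          rw [Finset.mem_filter] at hz ⊢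
          exact ⟨hX z hz.1 y hy hb hyz, hyz.trans_lt hz.2⟩
      have h3 : Even (X.filter (· < x)).card := by
        convert even_card_of_sdiff_mem Y hsd (hXY x hx.1).1 using 2
        ext y
        simp only [Finset.mem_filter, Finset.mem_univ, true_and]
        constructor
        · rintro ⟨hy, hlt⟩
          exact ⟨(hXY y hy).1, (hXY y hy).2, hlt⟩
        · rintro ⟨hy, hb, hlt⟩
          exact ⟨hX x hx.1 y hy hb hlt.le, hlt⟩
      rw [chainCount_eq_add hx.1 hmax]
      have h4 := Finset.card_erase_add_one hx.1
      rw [Nat.odd_add] at h2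
      rw [Nat.odd_iff] at h1 ⊢
      have h5 := Nat.odd_iff.1 (h2.2 h3)
      omega

open Classical in
/-- The combination of Smith theory, the Lefschetz trace formula and chain counting: if the
nonbottom part of a lower set `Y` is acyclic then the number of elements of `Y` fixed by `P` and
`g` is even. -/
theorem even_card_fixed_of_acyclic {α : Type*} [Fintype α] [BooleanAlgebra α] (Y : Set α)
    (hbot : ⊥ ∈ Y) (hY : IsLowerSet Y) (hacyc : AcyclicFamily (chainFamily (Y \ {⊥})))
    (P : Finset (α ≃o α)) (hP : ∀ σ ∈ P, ∀ x, σ (σ x) = x)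
    (hcomm : ∀ σ ∈ P, ∀ τ ∈ P, ∀ x, σ (τ x) = τ (σ x)) (hPY : ∀ σ ∈ P, ∀ x ∈ Y, σ x ∈ Y)
    (g : α ≃o α) (hg : ∀ x, g x ∈ Y ↔ x ∈ Y)
    (hgP : ∀ x, (∀ σ ∈ P, σ (g x) = g x) ↔ ∀ σ ∈ P, σ x = x) :
    Even (Finset.univ.filter fun x => x ∈ Y ∧ (∀ σ ∈ P, σ x = x) ∧ g x = x).card := by
  set Z : Set α := {x | x ∈ Y ∧ (∀ σ ∈ P, σ x = x) ∧ g x = x} with hZ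
  have h1 := hacyc.chainFamily_fixed_finset (P.image fun σ : α ≃o α => (σ : α → α))
    (by simpa using fun σ _ => σ.monotone) (by simpa [Function.Involutive] using hP) (by simpa using hcomm)
    (by
      simp only [Finset.mem_image, forall_exists_index, and_imp, forall_apply_eq_imp_iff₂,
        Set.mem_sdiff, Set.mem_singleton_iff, map_eq_bot_iff]
      exact fun σ hσ x hx hb => ⟨hPY σ hσ x hx, hb⟩)
  have h2 := even_card_chainFamily_fixed h1 g (by simpa [hg] using fun x _ _ => hgP x)
  have h3 : (Finset.univ.filter fun A : Finset α => A ∈ chainFamily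
      {x | x ∈ {x | x ∈ Y \ {⊥} ∧ ∀ σ ∈ P.image fun σ : α ≃o α => (σ : α → α), σ x = x} ∧
        g x = x}).card = chainCount (Finset.univ.filter fun x => x ∈ Z ∧ x ≠ ⊥) := by
    rw [chainCount]
    congr 1
    ext A
    rw [Finset.mem_filter, Finset.mem_filter]
    refine and_congr_right fun _ => ?_
    refine and_congr_left fun _ => ?_
    simp only [hZ, Set.subset_def, Finset.subset_iff, Finset.mem_coe]
    refine forall₂_congr fun x _ => ?_
    simp
    tauto
  rw [h3] at h2
  have h4 := chainCount_add_card_odd Z ?_ (Finset.univ.filter fun x => x ∈ Z ∧ x ≠ ⊥)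
    (by simp) (by simp; tauto)
  · have h5 : (Finset.univ.filter fun x => x ∈ Z).card =
        (Finset.univ.filter fun x => x ∈ Z ∧ x ≠ ⊥).card + 1 := by
      rw [← Finset.card_insert_of_notMem (a := ⊥) (by simp)]
      congr 1
      ext x
      have : ⊥ ∈ Z := ⟨hbot, fun σ _ => map_bot σ, map_bot g⟩
      simp only [Finset.mem_filter, Finset.mem_univ, true_and, Finset.mem_insert]
      by_cases hx : x = ⊥
      · simp [hx, this]
      · simp [hx]
    change Even (Finset.univ.filter fun x => x ∈ Z).card
    rw [h5]
    rw [Nat.odd_add] at h4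
    have h6 : ¬ Even (Finset.univ.filter fun x => x ∈ Z ∧ x ≠ ⊥).card := fun h => by
      exact (Nat.not_odd_iff_even.2 h2) (h4.2 h)
    exact (Nat.not_even_iff_odd.1 h6).add_one
  · rintro x ⟨hx, hxP, hxg⟩ y ⟨hy, hyP, hyg⟩ _
    refine ⟨hY sdiff_le hx, fun σ hσ => ?_, ?_⟩
    · rw [map_sdiff', hxP σ hσ, hyP σ hσ]
    · rw [map_sdiff', hxg, hyg]

end ChainParity

section FixedParity

open Classical in
lemma card_eq_card_filter_fixed {X : Type*} (t : X → X) (k : ℕ) (s : Finset X)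
    (hs : ∀ x ∈ s, t x ∈ s) (ht : ∀ x ∈ s, t^[2 ^ k] x = x) :
    (s.card : ZMod 2) = ((s.filter fun x => t x = x).card : ZMod 2) := by
  induction k generalizing s with
  | zero =>
    rw [Finset.filter_true_of_mem]
    simpa using ht
  | succ k ih =>
    have hiter : ∀ n : ℕ, ∀ x ∈ s, t^[n] x ∈ s := by
      intro n
      induction n with
      | zero => simp
      | succ n ihn =>
        intro x hx
        rw [Function.iterate_succ_apply']
        exact hs _ (ihn x hx)
    have h1 : (s.card : ZMod 2) = ((s.filter fun x => t^[2 ^ k] x = x).card : ZMod 2) := by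
      rw [← Finset.card_filter_add_card_filter_not (s := s) (fun x => t^[2 ^ k] x = x)]
      push_cast
      rw [add_eq_left, Finset.cast_card]
      have hinv : ∀ x ∈ s, t^[2 ^ k] (t^[2 ^ k] x) = x := fun x hx => by
        rw [← Function.iterate_add_apply, ← two_mul, ← pow_succ']
        exact ht x hx
      refine Finset.sum_involution (fun x _ => t^[2 ^ k] x) ?_ ?_ ?_ ?_
      · intros; exact CharTwo.add_self_eq_zero _
      · intro x hx _
        exact (Finset.mem_filter.1 hx).2
      · intro x hx
        rw [Finset.mem_filter] at hx ⊢
        refine ⟨hiter _ x hx.1, fun h => hx.2 ?_⟩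
        rw [hinv x hx.1] at h
        exact h.symm
      · intro x hx
        exact hinv x (Finset.mem_filter.1 hx).1
    rw [h1, ih]
    · congr 2
      ext x
      simp only [Finset.mem_filter]
      refine ⟨fun h => ⟨h.1.1, h.2⟩, fun h => ⟨⟨h.1, ?_⟩, h.2⟩⟩
      exact Function.iterate_fixed h.2 _
    · intro x hx
      rw [Finset.mem_filter] at hx ⊢
      refine ⟨hs x hx.1, ?_⟩
      rw [← Function.iterate_succ_apply, Function.iterate_succ_apply', hx.2]
    · intro x hx
      exact (Finset.mem_filter.1 hx).2

end FixedParity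

section BlowUpHom

variable {V : Type*} (H : SimpleGraph V)

/-- `H` maps homomorphically to the graph obtained from `G` by replacing every vertex `i` by a
clique with `w i` vertices. -/
def BlowHom {I : Type*} (w : I → ℕ) (G : SimpleGraph I) : Prop :=
  ∃ (φ : V → I) (κ : V → ℕ), (∀ v, κ v < w (φ v)) ∧
    ∀ v v', H.Adj v v' → G.Adj (φ v) (φ v') ∨ (φ v = φ v' ∧ κ v ≠ κ v')

open Classical in
/-- The parity of the number of graphs whose clique blow-up admits no homomorphism from `H`. -/
noncomputable def blowFreeParity {I : Type*} [Fintype I] (w : I → ℕ) : ZMod 2 :=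
  ((Finset.univ.filter fun G : SimpleGraph I => ¬ BlowHom H w G).card : ZMod 2)

lemma blowHom_comap {I J : Type*} (e : I ≃ J) (w : J → ℕ) (G : SimpleGraph J) :
    BlowHom H (w ∘ e) (G.comap e) ↔ BlowHom H w G := by
  constructor
  · rintro ⟨φ, κ, h1, h2⟩
    exact ⟨e ∘ φ, κ, h1, fun v v' h => by simpa using h2 v v' h⟩
  · rintro ⟨φ, κ, h1, h2⟩
    exact ⟨e.symm ∘ φ, κ, by simpa using h1, fun v v' h => by simpa using h2 v v' h⟩

lemma blowFreeParity_equiv {I J : Type*} [Fintype I] [Fintype J] (e : I ≃ J) (w : J → ℕ) :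
    blowFreeParity H (w ∘ e) = blowFreeParity H w := by
  classical
  unfold blowFreeParity
  congr 1
  symm
  refine Finset.card_bij (fun G _ => G.comap e) ?_ ?_ ?_
  · intro G hG
    simpa [blowHom_comap] using hG
  · intro G _ G' _ h
    ext x y
    have := congrArg (fun G : SimpleGraph I => G.Adj (e.symm x) (e.symm y)) h
    simpa using this
  · intro G hG
    refine ⟨G.comap e.symm, ?_, ?_⟩
    · simp only [Finset.mem_filter, Finset.mem_univ, true_and] at hG ⊢
      rw [← blowHom_comap H e]
      convert hG
      ext x y
      simp
    · ext x y
      simp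

/-- Prescribe the value at `none`. -/
def optionCons {J : Type*} (a : ℕ) (u : J → ℕ) : Option J → ℕ
  | none => a
  | some j => u j

/-- Identify the two extra points. -/
def mergeTwin {J : Type*} : Option (Option J) → Option J
  | none => none
  | some x => x

/-- Duplicate the vertex `none`, the two copies being adjacent iff `b`. -/
def twinGraph {J : Type*} (b : Prop) (G : SimpleGraph (Option J)) :
    SimpleGraph (Option (Option J)) where
  Adj p r := G.Adj (mergeTwin p) (mergeTwin r) ∨ (b ∧ p ≠ r ∧ mergeTwin p = mergeTwin r)
  symm := ⟨fun p r h => by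
    rcases h with h | ⟨h1, h2, h3⟩
    · exact Or.inl h.symm
    · exact Or.inr ⟨h1, h2.symm, h3.symm⟩⟩
  loopless := ⟨fun p h => by
    rcases h with h | ⟨_, h2, _⟩
    · exact G.loopless.irrefl _ h
    · exact h2 rfl⟩

lemma mergeTwin_map_some {J : Type*} (x : Option J) : mergeTwin (x.map some) = x := by
  cases x <;> rfl

lemma blowHom_twinGraph_false {J : Type*} (a : ℕ) (u : J → ℕ) (G : SimpleGraph (Option J)) :
    BlowHom H (optionCons a (optionCons a u)) (twinGraph False G) ↔
      BlowHom H (optionCons a u) G := by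
  constructor
  · rintro ⟨φ, κ, h1, h2⟩
    refine ⟨mergeTwin ∘ φ, κ, fun v => ?_, fun v v' h => ?_⟩
    · have := h1 v
      simp only [Function.comp]
      rcases hp : φ v with _ | _ | j <;> rw [hp] at this <;> exact this
    · rcases h2 v v' h with h' | h'
      · simpa [twinGraph] using Or.inl h'
      · exact Or.inr ⟨congrArg mergeTwin h'.1, h'.2⟩
  · rintro ⟨φ, κ, h1, h2⟩
    refine ⟨fun v => (φ v).map some, κ, fun v => ?_, fun v v' h => ?_⟩
    · have := h1 v
      rcases hp : φ v with _ | j <;> simp only [hp] at this ⊢ <;> exact this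
    · rcases h2 v v' h with h' | h'
      · left
        simpa [twinGraph, mergeTwin_map_some] using h'
      · exact Or.inr ⟨by simp only [h'.1], h'.2⟩

lemma blowHom_twinGraph_true {J : Type*} (a : ℕ) (u : J → ℕ) (G : SimpleGraph (Option J)) :
    BlowHom H (optionCons a (optionCons a u)) (twinGraph True G) ↔
      BlowHom H (optionCons (2 * a) u) G := by
  classical
  constructor
  · rintro ⟨φ, κ, h1, h2⟩
    refine ⟨mergeTwin ∘ φ, fun v => if φ v = some none then κ v + a else κ v,
      fun v => ?_, fun v v' h => ?_⟩
    · have := h1 v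
      simp only [Function.comp]
      rcases hp : φ v with _ | _ | j <;> simp [hp, optionCons, mergeTwin] at this ⊢ <;> omega
    · have hv := h1 v
      have hv' := h1 v'
      rcases h2 v v' h with (h' | ⟨-, h3, h4⟩) | ⟨h3, h4⟩
      · exact Or.inl h'
      · right
        refine ⟨h4, ?_⟩
        revert h3 h4 hv hv'
        rcases hp : φ v with _ | _ | j <;> rcases hp' : φ v' with _ | _ | j' <;>
          simp [hp, hp', optionCons, mergeTwin] <;> grind
      · right
        refine ⟨congrArg mergeTwin h3, ?_⟩
        simp only [h3]
        split_ifs <;> omega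
  · rintro ⟨φ, κ, h1, h2⟩
    refine ⟨fun v => if φ v = none ∧ a ≤ κ v then some none else (φ v).map some,
      fun v => if φ v = none ∧ a ≤ κ v then κ v - a else κ v, fun v => ?_, fun v v' h => ?_⟩
    · have := h1 v
      revert this
      rcases hp : φ v with _ | j
      · by_cases hk : a ≤ κ v <;> simp [hp, optionCons, hk] <;> omega
      · simp [hp, optionCons]
    · have hm : ∀ v, mergeTwin (if φ v = none ∧ a ≤ κ v then some none else (φ v).map some) =
          φ v := fun v => by
        split_ifs with hk
        · exact hk.1.symm
        · exact mergeTwin_map_some _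
      rcases h2 v v' h with h' | ⟨h3, h4⟩
      · left
        left
        simpa only [hm] using h'
      · by_cases heq : (if φ v = none ∧ a ≤ κ v then some none else (φ v).map some) =
          (if φ v' = none ∧ a ≤ κ v' then some none else (φ v').map some)
        · right
          refine ⟨heq, ?_⟩
          revert heq
          rcases hp : φ v' with _ | j
          · by_cases hk : a ≤ κ v <;> by_cases hk' : a ≤ κ v' <;>
              simp [h3, hp, hk, hk'] <;> omega
          · simpa [h3, hp] using h4
        · left
          right
          exact ⟨trivial, heq, by rw [hm, hm, h3]⟩

/-- Exchange the two extra points. -/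
def swapTwin {J : Type*} : Option (Option J) → Option (Option J)
  | none => some none
  | some none => none
  | some (some j) => some (some j)

lemma swapTwin_swapTwin {J : Type*} (p : Option (Option J)) : swapTwin (swapTwin p) = p := by
  rcases p with _ | _ | j <;> rfl

lemma blowFreeParity_twin {J : Type*} [Fintype J] (a : ℕ) (u : J → ℕ) :
    blowFreeParity H (optionCons a (optionCons a u)) =
      blowFreeParity H (optionCons a u) + blowFreeParity H (optionCons (2 * a) u) := by
  classical
  unfold blowFreeParity
  have hinv : Function.Involutive (swapTwin (J := J)) := swapTwin_swapTwin
  have hw : optionCons a (optionCons a u) ∘ hinv.toPerm = optionCons a (optionCons a u) := by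
    ext p
    rcases p with _ | _ | j <;> rfl
  rw [card_eq_card_filter_fixed
    (fun G : SimpleGraph (Option (Option J)) => G.comap hinv.toPerm) 1]
  · rw [← Finset.card_filter_add_card_filter_not (fun G : SimpleGraph (Option (Option J)) =>
      ¬ G.Adj none (some none)), Nat.cast_add]
    have key : ∀ (b : Prop) (c : ℕ), (∀ G, BlowHom H (optionCons a (optionCons a u))
        (twinGraph b G) ↔ BlowHom H (optionCons c u) G) →
        ((Finset.univ.filter fun G => ¬ BlowHom H (optionCons c u) G).card) =
        (((Finset.univ.filter fun G => ¬ BlowHom H (optionCons a (optionCons a u)) G).filter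
          fun G => G.comap hinv.toPerm = G).filter fun G => (G.Adj none (some none) ↔ b)).card := by
      intro b c hbc
      refine Finset.card_bij (fun G _ => twinGraph b G) ?_ ?_ ?_
      · intro G hG
        simp only [Finset.mem_filter, Finset.mem_univ, true_and] at hG ⊢
        refine ⟨⟨(hbc G).not.2 hG, ?_⟩, ?_⟩
        · ext p r
          have hm : ∀ p : Option (Option J), mergeTwin (swapTwin p) = mergeTwin p := fun p => by
            rcases p with _ | _ | j <;> rfl
          simp [twinGraph, hm, hinv.injective.eq_iff]
        · simp [twinGraph, mergeTwin]
      · intro G _ G' _ h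
        ext x y
        have := congrArg (fun G => G.Adj (x.map some) (y.map some)) h
        have hne : x.map some ≠ y.map some ∧ x = y ↔ False := by
          simp only [iff_false]
          rintro ⟨h1, rfl⟩
          exact h1 rfl
        simpa [twinGraph, mergeTwin_map_some, hne] using this
      · intro G hG
        simp only [Finset.mem_filter, Finset.mem_univ, true_and] at hG
        obtain ⟨⟨h1, h2⟩, h3⟩ := hG
        have h4 : ∀ p r, G.Adj (swapTwin p) (swapTwin r) ↔ G.Adj p r := fun p r => by
          have := congrArg (fun G : SimpleGraph (Option (Option J)) => G.Adj p r) h2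
          simpa using this
        have h5 : twinGraph b (G.comap (Option.map some)) = G := by
          ext p r
          have e1 := fun j => h4 none (some (some j))
          have e2 := fun j => h4 (some (some j)) none
          have e3 := G.adj_comm none (some none)
          rcases p with _ | _ | j <;> rcases r with _ | _ | j' <;>
            simp [twinGraph, mergeTwin, swapTwin] at e1 e2 ⊢ <;> simp_all
        refine ⟨G.comap (Option.map some), ?_, h5⟩
        simp only [Finset.mem_filter, Finset.mem_univ, true_and]
        rwa [← hbc, h5]
    have k1 := key False a (blowHom_twinGraph_false H a u)
    have k2 := key True (2 * a) (blowHom_twinGraph_true H a u)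
    simp only [iff_false, iff_true] at k1 k2
    simp only [not_not]
    convert congrArg₂ (fun x y : ℕ => (x : ZMod 2) + y) k1.symm k2.symm
  · intro G hG
    simp only [Finset.mem_filter, Finset.mem_univ, true_and] at hG ⊢
    rw [← hw, blowHom_comap]
    exact hG
  · intro G _
    ext p r
    simp [hinv p, hinv r]

end BlowUpHom

section WeightAlgebra

lemma add_pow_two_pow_of_commute {R : Type*} [Ring R] (h2 : ∀ z : R, z + z = 0) {x y : R}
    (h : Commute x y) (n : ℕ) : (x + y) ^ 2 ^ n = x ^ 2 ^ n + y ^ 2 ^ n := by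
  induction n with
  | zero => simp
  | succ n ih =>
    have hc : y ^ 2 ^ n * x ^ 2 ^ n = x ^ 2 ^ n * y ^ 2 ^ n := (h.symm.pow_pow _ _).eq
    rw [pow_succ, pow_mul, ih, sq, pow_mul, pow_mul, sq, sq, mul_add, add_mul, add_mul, hc]
    generalize x ^ 2 ^ n = a, y ^ 2 ^ n = b
    calc a * a + a * b + (a * b + b * b) = a * a + (a * b + a * b) + b * b := by abel
      _ = _ := by rw [h2, add_zero]

/-- Functions on multisets of weights satisfying the twin relation and vanishing on multisets
with a weight at least `h`. -/
def twinSubmodule (h : ℕ) : Submodule (ZMod 2) (Multiset ℕ → ZMod 2) where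
  carrier := {f | (∀ a m, f (a ::ₘ a ::ₘ m) = f (a ::ₘ m) + f ((2 * a) ::ₘ m)) ∧
    ∀ a m, h ≤ a → f (a ::ₘ m) = 0}
  add_mem' := by
    rintro f g ⟨hf, hf'⟩ ⟨hg, hg'⟩
    refine ⟨fun a m => ?_, fun a m ha => ?_⟩
    · simp only [Pi.add_apply, hf, hg]
      ring
    · simp [hf' a m ha, hg' a m ha]
  zero_mem' := by simp
  smul_mem' := by
    rintro c f ⟨hf, hf'⟩
    refine ⟨fun a m => ?_, fun a m ha => ?_⟩
    · simp only [Pi.smul_apply, hf, smul_add]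
    · simp [hf' a m ha]

/-- Adjoining an element of weight `a`, as an operator. -/
def consOperator (h a : ℕ) : Module.End (ZMod 2) (twinSubmodule h) where
  toFun f := ⟨fun m => f.1 (a ::ₘ m), fun b m => by
      simp only [Multiset.cons_swap a b, Multiset.cons_swap a (2 * b)]
      exact f.2.1 b (a ::ₘ m), fun b m hb => by
      simp only [Multiset.cons_swap a b]
      exact f.2.2 b (a ::ₘ m) hb⟩
  map_add' _ _ := rfl
  map_smul' _ _ := rfl

lemma consOperator_apply (h a : ℕ) (f : twinSubmodule h) (m : Multiset ℕ) :
    (consOperator h a f).1 m = f.1 (a ::ₘ m) := rfl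

lemma consOperator_commute (h a b : ℕ) : Commute (consOperator h a) (consOperator h b) := by
  refine LinearMap.ext fun f => Subtype.ext (funext fun m => ?_)
  simp only [Module.End.mul_apply, consOperator_apply]
  rw [Multiset.cons_swap]

lemma consOperator_sq (h a : ℕ) :
    consOperator h a ^ 2 = consOperator h a + consOperator h (2 * a) := by
  refine LinearMap.ext fun f => Subtype.ext (funext fun m => ?_)
  rw [sq]
  exact f.2.1 a m

lemma end_twinSubmodule_add_self (h : ℕ) (z : Module.End (ZMod 2) (twinSubmodule h)) :
    z + z = 0 := by
  rw [← two_smul (ZMod 2), show (2 : ZMod 2) = 0 from rfl, zero_smul]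

lemma consOperator_pow (h a t : ℕ) :
    consOperator h a ^ 2 ^ 2 ^ t = consOperator h a + consOperator h (2 ^ 2 ^ t * a) := by
  induction t generalizing a with
  | zero => simpa using consOperator_sq h a
  | succ t ih =>
    have e : 2 ^ 2 ^ (t + 1) = 2 ^ 2 ^ t * 2 ^ 2 ^ t := by
      rw [← pow_add, ← two_mul, ← pow_succ']
    rw [e, pow_mul, ih, add_pow_two_pow_of_commute (end_twinSubmodule_add_self h)
      (consOperator_commute _ _ _), ih, ih, ← mul_assoc, add_assoc,
      ← add_assoc (consOperator h (2 ^ 2 ^ t * a)), end_twinSubmodule_add_self, zero_add]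

lemma consOperator_one_pow (h t : ℕ) (ht : h ≤ 2 ^ 2 ^ t) (k : ℕ) :
    consOperator h 1 ^ (1 + k * (2 ^ 2 ^ t - 1)) = consOperator h 1 := by
  have h1 : consOperator h 1 ^ 2 ^ 2 ^ t = consOperator h 1 := by
    rw [consOperator_pow, add_eq_left]
    refine LinearMap.ext fun f => Subtype.ext (funext fun m => ?_)
    exact f.2.2 _ m (by simpa using ht)
  have h2 : 1 ≤ 2 ^ 2 ^ t := Nat.one_le_two_pow
  induction k with
  | zero => simp
  | succ k ih =>
    rw [show 1 + (k + 1) * (2 ^ 2 ^ t - 1) = 1 + k * (2 ^ 2 ^ t - 1) + (2 ^ 2 ^ t - 1) by ring,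
      pow_add, ih, ← pow_succ', Nat.sub_add_cancel h2, h1]

lemma consOperator_pow_apply (h a n : ℕ) (f : twinSubmodule h) (m : Multiset ℕ) :
    ((consOperator h a ^ n) f).1 m = f.1 (Multiset.replicate n a + m) := by
  induction n generalizing m with
  | zero => simp
  | succ n ih =>
    rw [pow_succ', Module.End.mul_apply, consOperator_apply, ih, Multiset.replicate_succ,
      Multiset.cons_add, ← Multiset.add_cons]

variable {V : Type*} (H : SimpleGraph V)

/-- The parity of blow-up-free graphs, as a function of the multiset of weights. -/
noncomputable def weightParity (m : Multiset ℕ) : ZMod 2 :=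
  blowFreeParity H (fun x : m => (x : ℕ))

lemma weightParity_cons (a : ℕ) (m : Multiset ℕ) :
    weightParity H (a ::ₘ m) = blowFreeParity H (optionCons a fun x : m => (x : ℕ)) := by
  rw [weightParity, ← blowFreeParity_equiv H (Multiset.consEquiv (v := a) (m := m)).symm]
  congr 1
  ext x
  rcases x with _ | x <;> rfl

lemma weightParity_cons_cons (a b : ℕ) (m : Multiset ℕ) :
    weightParity H (a ::ₘ b ::ₘ m) =
      blowFreeParity H (optionCons a (optionCons b fun x : m => (x : ℕ))) := by
  rw [weightParity_cons,
    ← blowFreeParity_equiv H (Multiset.consEquiv (v := b) (m := m)).symm.optionCongr]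
  congr 1
  ext x
  rcases x with _ | _ | x <;> rfl

lemma weightParity_mem [Fintype V] :
    weightParity H ∈ twinSubmodule (Fintype.card V) := by
  classical
  refine ⟨fun a m => ?_, fun a m ha => ?_⟩
  · rw [weightParity_cons_cons, blowFreeParity_twin, weightParity_cons, weightParity_cons]
  · rw [weightParity_cons, blowFreeParity, Finset.filter_false_of_mem]
    · simp
    · intro G _
      rw [not_not]
      let e := Fintype.equivFin V
      refine ⟨fun _ => none, fun v => e v, fun v => (e v).2.trans_le ha, fun v v' hv => ?_⟩
      refine Or.inr ⟨rfl, fun hh => hv.ne (e.injective (Fin.ext hh))⟩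

lemma blowHom_one_iff {I : Type*} (G : SimpleGraph I) :
    BlowHom H (fun _ => 1) G ↔ Nonempty (H →g G) := by
  constructor
  · rintro ⟨φ, κ, h1, h2⟩
    refine ⟨⟨φ, fun {v v'} h => ?_⟩⟩
    rcases h2 v v' h with h' | ⟨_, h'⟩
    · exact h'
    · exact absurd ((Nat.lt_one_iff.1 (h1 v)).trans (Nat.lt_one_iff.1 (h1 v')).symm) h'
  · rintro ⟨φ⟩
    exact ⟨φ, fun _ => 0, fun _ => one_pos, fun v v' h => Or.inl (φ.map_adj h)⟩

open Classical in
/-- The number of graphs on `J` admitting no homomorphism from `H` is odd for suitable `|J|`. -/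
theorem odd_card_hom_free [Fintype V] (hH : H.edgeSet.Nonempty) (t k : ℕ)
    (ht : Fintype.card V ≤ 2 ^ 2 ^ t) {J : Type*} [Fintype J]
    (hJ : Fintype.card J = 1 + k * (2 ^ 2 ^ t - 1)) :
    Odd (Finset.univ.filter fun G : SimpleGraph J => ¬ Nonempty (H →g G)).card := by
  have h1 : ∀ (I : Type _) [Fintype I], weightParity H (Multiset.replicate (Fintype.card I) 1) =
      ((Finset.univ.filter fun G : SimpleGraph I => ¬ Nonempty (H →g G)).card : ZMod 2) := by
    intro I _
    have e : (Multiset.replicate (Fintype.card I) (1 : ℕ)).ToType ≃ I := Fintype.equivOfCardEq (by simp)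
    have hw : (fun x : (Multiset.replicate (Fintype.card I) (1 : ℕ)).ToType => x.1) = (fun _ => 1) ∘ e := by
      ext x
      exact Multiset.eq_of_mem_replicate (Multiset.coe_mem (x := x))
    rw [weightParity, hw, blowFreeParity_equiv, blowFreeParity]
    simp only [blowHom_one_iff]
  have h2 := consOperator_pow_apply (Fintype.card V) 1 (1 + k * (2 ^ 2 ^ t - 1))
    ⟨_, weightParity_mem H⟩ 0
  rw [consOperator_one_pow _ _ ht, consOperator_apply, ← hJ, add_zero] at h2
  rw [← ZMod.natCast_eq_one_iff_odd]
  refine (h1 J).symm.trans (h2.symm.trans ?_)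
  have h3 := h1 PUnit
  rw [Fintype.card_punit] at h3
  refine h3.trans ?_
  refine (congrArg Nat.cast (Finset.card_eq_one.2 ⟨⊥, ?_⟩)).trans Nat.cast_one
  ext G
  simp only [Finset.mem_filter, Finset.mem_univ, true_and, Finset.mem_singleton]
  constructor
  · intro _
    ext x y
    simp
  · rintro rfl ⟨φ⟩
    obtain ⟨e, he⟩ := hH
    induction e with
    | _ x y => exact (φ.map_adj he)

end WeightAlgebra

section PaleyClique

open Finset

variable {p : ℕ} [Fact p.Prime]

lemma sum_mul_translate_eq_zero (f : ZMod p → ℝ) (hf : ∑ x, f x = 0) {s : ZMod p} (hs : s ≠ 0) :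
    ∑ c : ZMod p, ∑ x, f x * f (x + c * s) = 0 := by
  rw [sum_comm]
  have h : ∀ x, ∑ c : ZMod p, f x * f (x + c * s) = 0 := fun x => by
    rw [← mul_sum]
    have e : ∑ c : ZMod p, f (x + c * s) = ∑ y, f y :=
      Equiv.sum_comp ((Equiv.mulRight₀ s hs).trans (Equiv.addLeft x)) f
    rw [e, hf, mul_zero]
  simp [h]

open Classical in
lemma sum_sq_orbit_sum_le (K : Subgroup (ZMod p)ˣ) (f : ZMod p → ℝ) (hf : ∑ x, f x = 0)
    {c : ZMod p} (hc : c ≠ 0) :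
    ∑ x, (∑ u : K, f (x + c * (u : (ZMod p)ˣ))) ^ 2 ≤ p * ∑ x, f x ^ 2 := by
  set A : ZMod p → ℝ := fun c => ∑ x, (∑ u : K, f (x + c * (u : (ZMod p)ˣ))) ^ 2 with hA
  have hA0 : ∀ c, 0 ≤ A c := fun c => sum_nonneg fun x _ => sq_nonneg _
  have hinv : ∀ a : K, A (c * (a : (ZMod p)ˣ)) = A c := fun a => by
    simp only [hA]
    refine sum_congr rfl fun x _ => ?_
    congr 1
    rw [← Equiv.sum_comp (Equiv.mulLeft a) fun u : K => f (x + c * (u : (ZMod p)ˣ))]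
    refine sum_congr rfl fun u _ => ?_
    simp [mul_assoc]
  have hsum : (Fintype.card K : ℝ) * A c ≤ ∑ c, A c := by
    have h1 : ∑ a : K, A (c * (a : (ZMod p)ˣ)) = Fintype.card K * A c := by
      simp [hinv]
    rw [← h1, ← sum_image (f := A) (g := fun a : K => c * ((a : (ZMod p)ˣ) : ZMod p))]
    · exact sum_le_univ_sum_of_nonneg hA0
    · intro a _ b _ hab
      exact Subtype.ext (Units.ext (mul_left_cancel₀ hc hab))
  have htot : ∑ c, A c = Fintype.card K * (p * ∑ x, f x ^ 2) := by
    have h1 : ∀ c, A c = ∑ u : K, ∑ v : K,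
        ∑ x, f x * f (x + c * ((v : (ZMod p)ˣ) - (u : (ZMod p)ˣ))) := fun c => by
      simp only [hA, sq, sum_mul_sum]
      rw [sum_comm]
      refine sum_congr rfl fun u _ => ?_
      rw [sum_comm]
      refine sum_congr rfl fun v _ => ?_
      rw [← Equiv.sum_comp (Equiv.addRight (c * ((u : (ZMod p)ˣ) : ZMod p)))
        fun x => f x * f (x + c * ((v : (ZMod p)ˣ) - (u : (ZMod p)ˣ)))]
      refine sum_congr rfl fun x _ => ?_
      simp only [Equiv.coe_addRight]
      congr 2
      ring
    simp only [h1]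
    rw [sum_comm]
    have h2 : ∀ u v : K, ∑ c : ZMod p,
        ∑ x, f x * f (x + c * ((v : (ZMod p)ˣ) - (u : (ZMod p)ˣ))) =
        if v = u then p * ∑ x, f x ^ 2 else 0 := fun u v => by
      split_ifs with h
      · subst h
        simp [sq]
      · refine sum_mul_translate_eq_zero f hf (sub_ne_zero.2 fun h' => h ?_)
        exact Subtype.ext (Units.ext h')
    have h3 : ∀ u : K, ∑ c : ZMod p, ∑ v : K,
        ∑ x, f x * f (x + c * ((v : (ZMod p)ˣ) - (u : (ZMod p)ˣ))) = p * ∑ x, f x ^ 2 :=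
      fun u => by
        rw [sum_comm]
        simp [h2]
    simp [h3]
  rw [htot] at hsum
  exact le_of_mul_le_mul_left hsum (by exact_mod_cast Fintype.card_pos)

open Classical in
lemma exists_large_neighbourhood (K : Subgroup (ZMod p)ˣ) {c : ZMod p} (hc : c ≠ 0)
    (S : Finset (ZMod p))
    (hS : 4 * (p : ℝ) ^ 3 < (Fintype.card K : ℝ) ^ 2 * (S.card : ℝ) ^ 2) :
    ∃ x ∈ S, (Fintype.card K : ℝ) * S.card ≤
      2 * p * (S.filter fun y => ∃ u ∈ K, y - x = c * (u : ZMod p)).card := by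
  by_contra! hcon
  have hp : (0 : ℝ) < p := by exact_mod_cast (Fact.out : p.Prime).pos
  set d : ℝ := (Fintype.card K : ℝ) with hd
  set n : ℝ := (S.card : ℝ) with hn
  have hn0 : 0 < n := by
    rcases (Nat.cast_nonneg S.card : (0 : ℝ) ≤ S.card).eq_or_lt with h | h
    · rw [← hn] at h
      rw [← h] at hS
      have : (0 : ℝ) < p ^ 3 := by positivity
      nlinarith
    · exact h
  have hd0 : 0 < d := by rw [hd]; exact_mod_cast Fintype.card_pos
  set f : ZMod p → ℝ := fun x => (if x ∈ S then 1 else 0) - n / p with hf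
  have hf0 : ∑ x, f x = 0 := by
    simp only [hf, sum_sub_distrib, sum_ite_mem, univ_inter, sum_const, card_univ, ZMod.card,
      nsmul_eq_mul, mul_one]
    rw [← hn]
    field_simp
    ring
  have hf2 : ∑ x, f x ^ 2 ≤ n := by
    have h1 : ∀ x, f x ^ 2 = (if x ∈ S then (1 : ℝ) else 0) - n / p * (if x ∈ S then 1 else 0) -
        n / p * f x := fun x => by
      simp only [hf]
      split_ifs <;> ring
    simp only [h1, sum_sub_distrib, ← mul_sum, hf0, sum_ite_mem, univ_inter, sum_const,
      nsmul_eq_mul, mul_one, ← hn]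
    have : 0 ≤ n / p * n := by positivity
    linarith
  have hmain := (sum_sq_orbit_sum_le K f hf0 hc).trans (mul_le_mul_of_nonneg_left hf2 hp.le)
  have hlow : n * (d * n / (2 * p)) ^ 2 ≤ ∑ x, (∑ u : K, f (x + c * (u : (ZMod p)ˣ))) ^ 2 := by
    have h2 : ∑ x ∈ S, (d * n / (2 * p)) ^ 2 = n * (d * n / (2 * p)) ^ 2 := by
      simp [hn]
    rw [← h2]
    refine le_trans (sum_le_sum fun x hx => ?_)
      (sum_le_univ_sum_of_nonneg fun x => sq_nonneg _)
    have h3 := hcon x hx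
    have h4 : ∑ u : K, f (x + c * (u : (ZMod p)ˣ)) =
        ((univ.filter fun u : K => x + c * ((u : (ZMod p)ˣ) : ZMod p) ∈ S).card : ℝ)
          - d * n / p := by
      simp only [hf, sum_sub_distrib, sum_const, card_univ, nsmul_eq_mul, sum_boole, ← hd]
      ring
    have h5 : (univ.filter fun u : K => x + c * ((u : (ZMod p)ˣ) : ZMod p) ∈ S).card ≤
        (S.filter fun y => ∃ u ∈ K, y - x = c * (u : ZMod p)).card := by
      refine card_le_card_of_injOn (fun u => x + c * ((u : (ZMod p)ˣ) : ZMod p)) ?_ ?_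
      · intro u hu
        simp only [coe_filter, mem_univ, true_and, Set.mem_ofPred_eq] at hu ⊢
        exact ⟨hu, u, u.2, by ring⟩
      · intro a _ b _ hab
        exact Subtype.ext (Units.ext (mul_left_cancel₀ hc (add_left_cancel hab)))
    have h6 : ((univ.filter fun u : K => x + c * ((u : (ZMod p)ˣ) : ZMod p) ∈ S).card : ℝ) ≤
        d * n / (2 * p) := by
      rw [le_div_iff₀ (by positivity)]
      have : ((univ.filter fun u : K => x + c * ((u : (ZMod p)ˣ) : ZMod p) ∈ S).card : ℝ) ≤
        (S.filter fun y => ∃ u ∈ K, y - x = c * (u : ZMod p)).card := by exact_mod_cast h5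
      nlinarith
    have h7 : d * n / p = 2 * (d * n / (2 * p)) := by
      field_simp
    rw [h4, ← neg_sq (_ - _)]
    have h8 : 0 ≤ d * n / (2 * p) := by positivity
    refine pow_le_pow_left₀ h8 ?_ 2
    rw [h7]
    linarith
  have hfin := hlow.trans hmain
  rw [div_pow, mul_pow, mul_pow, mul_div_assoc', div_le_iff₀ (by positivity)] at hfin
  have : n * (d ^ 2 * n ^ 2) ≤ n * (4 * p ^ 3) := by nlinarith
  exact absurd (le_of_mul_le_mul_left this hn0) (not_le.2 hS)

lemma exists_clique_in (K : Subgroup (ZMod p)ˣ) {m : ℕ} (hm : p - 1 = m * Nat.card K)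
    {c : ZMod p} (hc : c ≠ 0) (k : ℕ) (S : Finset (ZMod p))
    (hS : (p : ℝ) * (4 * m) ^ (2 * k) < (S.card : ℝ) ^ 2) :
    ∃ v : Fin (k + 1) → ZMod p, (∀ i, v i ∈ S) ∧
      ∀ i j, i < j → ∃ u ∈ K, v j - v i = c * (u : ZMod p) := by
  classical
  have hp2 := (Fact.out : p.Prime).two_le
  have hp : (0 : ℝ) < p := by exact_mod_cast (Fact.out : p.Prime).pos
  induction k generalizing S with
  | zero =>
    have hne : S.Nonempty := by
      rw [← card_pos]
      by_contra h0
      have h0' : S.card = 0 := by omega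
      rw [h0'] at hS
      simp at hS
      linarith
    obtain ⟨x, hx⟩ := hne
    refine ⟨fun _ => x, fun _ => hx, fun i j hij => ?_⟩
    omega
  | succ k ih =>
    have hm' : (p : ℝ) - 1 = m * Fintype.card K := by
      rw [Nat.card_eq_fintype_card] at hm
      rw [← Nat.cast_one, ← Nat.cast_sub (by omega), hm]
      push_cast
      rfl
    have hm0 : 1 ≤ m := by
      by_contra h0
      have : m = 0 := by omega
      rw [this, zero_mul] at hm
      omega
    have hm1 : (1 : ℝ) ≤ m := by exact_mod_cast hm0
    set d : ℝ := (Fintype.card K : ℝ) with hd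
    have hd0 : 0 ≤ d := by positivity
    have hp2' : (2 : ℝ) ≤ p := by exact_mod_cast hp2
    have hpd : (p : ℝ) ≤ 2 * m * d := by nlinarith
    have h1 : (1 : ℝ) ≤ (4 * m) ^ (2 * k) := one_le_pow₀ (by linarith)
    have e : (4 * (m : ℝ)) ^ (2 * (k + 1)) = (4 * m) ^ (2 * k) * (16 * m ^ 2) := by
      rw [mul_add, pow_add]; ring
    rw [e] at hS
    obtain ⟨x, hx, hxS⟩ := exists_large_neighbourhood K hc S (by
      rw [← hd]
      have h2 : (p : ℝ) * (16 * m ^ 2) < (S.card : ℝ) ^ 2 := by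
        refine lt_of_le_of_lt ?_ hS
        exact mul_le_mul_of_nonneg_left (le_mul_of_one_le_left (by positivity) h1) hp.le
      have h3 : (p : ℝ) ^ 2 ≤ (2 * m * d) ^ 2 := pow_le_pow_left₀ hp.le hpd 2
      have hdpos : 0 < d ^ 2 := by
        rw [hd]
        have : 0 < Fintype.card K := Fintype.card_pos
        positivity
      calc 4 * (p : ℝ) ^ 3 = 4 * p * p ^ 2 := by ring
        _ ≤ 4 * p * (2 * m * d) ^ 2 := by gcongr
        _ = d ^ 2 * (p * (16 * m ^ 2)) := by ring
        _ < d ^ 2 * (S.card : ℝ) ^ 2 := by gcongr)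
    set S' := S.filter fun y => ∃ u ∈ K, y - x = c * (u : ZMod p) with hS'
    have hcard : (S.card : ℝ) ≤ 4 * m * S'.card := by
      have h4 : (p : ℝ) * S.card ≤ p * (4 * m * S'.card) := by
        calc (p : ℝ) * S.card ≤ 2 * m * d * S.card := by gcongr
          _ = 2 * m * (d * S.card) := by ring
          _ ≤ 2 * m * (2 * p * S'.card) := by gcongr
          _ = _ := by ring
      exact le_of_mul_le_mul_left h4 hp
    obtain ⟨v, hv, hvK⟩ := ih S' (by
      have h5 : (S.card : ℝ) ^ 2 ≤ (4 * m * S'.card) ^ 2 := by gcongr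
      have h6 : (p : ℝ) * (4 * m) ^ (2 * k) * (16 * m ^ 2) < (S'.card : ℝ) ^ 2 * (16 * m ^ 2) := by
        nlinarith
      exact lt_of_mul_lt_mul_right h6 (by positivity))
    refine ⟨Fin.cons x v, fun i => ?_, fun i j hij => ?_⟩
    · refine Fin.cases hx (fun i => ?_) i
      exact (mem_filter.1 (hv i)).1
    · induction j using Fin.cases with
      | zero => exact absurd hij (Fin.not_lt_zero i)
      | succ j =>
        induction i using Fin.cases with
        | zero => simpa using (mem_filter.1 (hv j)).2
        | succ i => simpa using hvK i j (Fin.succ_lt_succ_iff.1 hij)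

/-- A generalized Paley graph of small index has large cliques. -/
theorem exists_paley_clique (K : Subgroup (ZMod p)ˣ) {m h : ℕ} (hm : p - 1 = m * Nat.card K)
    (hh : 0 < h) (hmp : m ^ (2 * h) ≤ p) (hp : 4 ^ ((h + 1) * (2 * h)) < p)
    {c : ZMod p} (hc : c ≠ 0) :
    ∃ v : Fin h → ZMod p, ∀ i j, i < j → ∃ u ∈ K, v j - v i = c * (u : ZMod p) := by
  obtain ⟨k, rfl⟩ := Nat.exists_eq_succ_of_ne_zero hh.ne'
  obtain ⟨v, -, hv⟩ := exists_clique_in K hm hc k univ (by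
    have key : (4 * m) ^ (2 * k) < p := by
      rcases le_or_gt (4 ^ (k + 1)) m with h1 | h1
      · refine lt_of_lt_of_le ?_ hmp
        have hm0 : 0 < m := lt_of_lt_of_le (by positivity) h1
        calc (4 * m) ^ (2 * k) = (4 ^ k) ^ 2 * m ^ (2 * k) := by ring
          _ < m ^ 2 * m ^ (2 * k) := by
            gcongr
            exact lt_of_lt_of_le (Nat.pow_lt_pow_right (by norm_num) (Nat.lt_succ_self k)) h1
          _ = m ^ (2 * (k + 1)) := by ring
      · refine lt_of_le_of_lt ?_ hp
        calc (4 * m) ^ (2 * k) ≤ (4 * 4 ^ (k + 1)) ^ (2 * k) := by gcongr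
          _ = 4 ^ ((k + 1 + 1) * (2 * k)) := by rw [← pow_succ', ← pow_mul]
          _ ≤ _ := Nat.pow_le_pow_right (by norm_num) (by
            apply Nat.mul_le_mul_left; omega)
    rw [card_univ, ZMod.card, sq]
    have : ((4 * m : ℝ)) ^ (2 * k) < p := by exact_mod_cast key
    have hp0 : (0 : ℝ) < p := by exact_mod_cast (Fact.out : p.Prime).pos
    gcongr)
  exact ⟨v, hv⟩

end PaleyClique

section GraphAction

variable {W : Type*}

/-- The action of a permutation of the vertices on graphs. -/
def comapIso (e : Equiv.Perm W) : SimpleGraph W ≃o SimpleGraph W where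
  toFun G := G.comap e
  invFun G := G.comap e.symm
  left_inv G := by ext x y; simp
  right_inv G := by ext x y; simp
  map_rel_iff' := by
    intro G G'
    refine ⟨fun h x y hxy => ?_, fun h x y hxy => h hxy⟩
    have := @h (e.symm x) (e.symm y) (by simpa using hxy)
    simpa using this

@[simp] lemma comapIso_adj (e : Equiv.Perm W) (G : SimpleGraph W) (x y : W) :
    (comapIso e G).Adj x y ↔ G.Adj (e x) (e y) := Iff.rfl

/-- The automorphism group of a graph, as a group of permutations. -/
def graphAut (G : SimpleGraph W) : Subgroup (Equiv.Perm W) where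
  carrier := {e | ∀ x y, G.Adj (e x) (e y) ↔ G.Adj x y}
  one_mem' := fun _ _ => Iff.rfl
  mul_mem' := fun {a b} ha hb x y => (ha (b x) (b y)).trans (hb x y)
  inv_mem' := fun {a} ha x y => by
    have := ha (a⁻¹ x) (a⁻¹ y)
    simpa using this.symm

lemma mem_graphAut {G : SimpleGraph W} {e : Equiv.Perm W} :
    e ∈ graphAut G ↔ ∀ x y, G.Adj (e x) (e y) ↔ G.Adj x y := Iff.rfl

lemma comapIso_eq_self {G : SimpleGraph W} {e : Equiv.Perm W} :
    comapIso e G = G ↔ e ∈ graphAut G := by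
  rw [mem_graphAut, SimpleGraph.ext_iff, funext_iff]
  simp only [funext_iff, eq_iff_iff]
  rfl

lemma mem_graphAut_comapIso {G : SimpleGraph W} {e a : Equiv.Perm W} :
    a ∈ graphAut (comapIso e G) ↔ e * a * e⁻¹ ∈ graphAut G := by
  simp only [mem_graphAut, comapIso_adj, Equiv.Perm.mul_apply]
  refine ⟨fun h x y => ?_, fun h x y => ?_⟩
  · simpa using h (e⁻¹ x) (e⁻¹ y)
  · simpa using h (e x) (e y)

lemma comapIso_comapIso (e a : Equiv.Perm W) (G : SimpleGraph W) :
    comapIso e (comapIso a G) = comapIso (a * e) G := rfl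

end GraphAction

lemma ContainsCopy.of_comapIso {V W : Type} {H : SimpleGraph V} {G : SimpleGraph W}
    (e : Equiv.Perm W) : ContainsCopy H (comapIso e G) ↔ ContainsCopy H G := by
  constructor
  · rintro ⟨f, hf, h⟩
    exact ⟨e ∘ f, e.injective.comp hf, h⟩
  · rintro ⟨f, hf, h⟩
    exact ⟨e.symm ∘ f, e.symm.injective.comp hf, fun v w hvw => by simpa using h v w hvw⟩

section Blocks

variable {J : Type} {F : J → Type} [∀ j, Field (F j)]

/-- Translate every block. -/
def blockTranslate (b : ∀ j, F j) : Equiv.Perm (Σ j, F j) :=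
  Equiv.sigmaCongrRight fun j => Equiv.addRight (b j)

/-- Scale every block. -/
def blockScale (u : ∀ j, (F j)ˣ) : Equiv.Perm (Σ j, F j) :=
  Equiv.sigmaCongrRight fun j => Units.mulLeft (u j)

@[simp] lemma blockTranslate_apply (b : ∀ j, F j) (j : J) (x : F j) :
    blockTranslate b ⟨j, x⟩ = ⟨j, x + b j⟩ := rfl

@[simp] lemma blockScale_apply (u : ∀ j, (F j)ˣ) (j : J) (x : F j) :
    blockScale u ⟨j, x⟩ = ⟨j, u j * x⟩ := rfl

lemma blockTranslate_add (a b : ∀ j, F j) :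
    blockTranslate (a + b) = blockTranslate a * blockTranslate b := by
  ext ⟨j, x⟩ : 1
  simp [add_assoc, add_comm (a j)]

lemma blockTranslate_zero : blockTranslate (0 : ∀ j, F j) = 1 := by
  ext ⟨j, x⟩ : 1
  simp

lemma blockScale_mul (u v : ∀ j, (F j)ˣ) : blockScale (u * v) = blockScale u * blockScale v := by
  ext ⟨j, x⟩ : 1
  simp [mul_assoc]

lemma blockScale_one : blockScale (1 : ∀ j, (F j)ˣ) = 1 := by
  ext ⟨j, x⟩ : 1
  simp

lemma blockScale_pow (u : ∀ j, (F j)ˣ) (n : ℕ) : blockScale (u ^ n) = blockScale u ^ n := by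
  induction n with
  | zero => simp [blockScale_one]
  | succ n ih => rw [pow_succ, blockScale_mul, ih, pow_succ]

lemma blockScale_conj_translate (u : ∀ j, (F j)ˣ) (b : ∀ j, F j) :
    blockScale u * blockTranslate b * (blockScale u)⁻¹ = blockTranslate fun j => u j * b j := by
  rw [mul_inv_eq_iff_eq_mul]
  ext ⟨j, x⟩ : 1
  simp [mul_add]

lemma blockScale_conj_scale (u v : ∀ j, (F j)ˣ) :
    blockScale u * blockScale v * (blockScale u)⁻¹ = blockScale v := by
  rw [mul_inv_eq_iff_eq_mul, ← blockScale_mul, ← blockScale_mul, mul_comm]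

lemma blockTranslate_conj_translate (a b : ∀ j, F j) :
    blockTranslate a * blockTranslate b * (blockTranslate a)⁻¹ = blockTranslate b := by
  rw [mul_inv_eq_iff_eq_mul, ← blockTranslate_add, ← blockTranslate_add, add_comm]

open Classical in
lemma blockTranslate_mem_of_single [Fintype J] {G : SimpleGraph (Σ j, F j)}
    (h : ∀ j (c : F j), blockTranslate (Pi.single j c) ∈ graphAut G) (b : ∀ j, F j) :
    blockTranslate b ∈ graphAut G := by
  rw [← Finset.univ_sum_single b]
  induction (Finset.univ : Finset J) using Finset.induction_on with
  | empty => simp [blockTranslate_zero, one_mem]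
  | insert j s hj ih =>
    rw [Finset.sum_insert hj, blockTranslate_add]
    exact mul_mem (h j _) ih

variable (T : J → Prop) (l : ∀ j, (F j)ˣ)

open Classical in
/-- The scaling acting on the blocks satisfying `T` only. -/
noncomputable def scaleOn (j : J) : (F j)ˣ := if T j then l j else 1

open Classical in
/-- The translation by one on the blocks not satisfying `T`. -/
noncomputable def shiftOff (j : J) : F j := if T j then 0 else 1

/-- Scaling on the blocks satisfying `T` and translation by one on the others. -/
noncomputable def mixedPerm : Equiv.Perm (Σ j, F j) :=
  blockTranslate (shiftOff T) * blockScale (scaleOn T l)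

lemma mixedPerm_pow_apply_of_mem {j : J} (hj : T j) (x : F j) (k : ℕ) :
    (mixedPerm T l ^ k) ⟨j, x⟩ = ⟨j, ((l j ^ k : (F j)ˣ) : F j) * x⟩ := by
  induction k with
  | zero => simp
  | succ k ih =>
    rw [pow_succ', Equiv.Perm.mul_apply, ih]
    simp [mixedPerm, scaleOn, shiftOff, hj, pow_succ', mul_assoc]

lemma mixedPerm_pow_apply_of_notMem {j : J} (hj : ¬ T j) (x : F j) (k : ℕ) :
    (mixedPerm T l ^ k) ⟨j, x⟩ = ⟨j, x + k⟩ := by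
  induction k with
  | zero => simp
  | succ k ih =>
    rw [pow_succ', Equiv.Perm.mul_apply, ih]
    simp [mixedPerm, scaleOn, shiftOff, hj, add_assoc]

open Classical in
lemma invariant_iff [Fintype J]
    (hgen : ∀ j, ¬ T j → ∀ c : F j, ∃ k : ℕ, (k : F j) = c ∧
      ∀ i, i ≠ j → (T i → l i ^ k = 1) ∧ (¬ T i → (k : F i) = 0))
    (G : SimpleGraph (Σ j, F j)) :
    ((∀ j, T j → ∀ c : F j, blockTranslate (Pi.single j c) ∈ graphAut G) ∧
      mixedPerm T l ∈ graphAut G) ↔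
    (∀ b : ∀ j, F j, blockTranslate b ∈ graphAut G) ∧ blockScale (scaleOn T l) ∈ graphAut G := by
  constructor
  · rintro ⟨h1, h2⟩
    have h3 : ∀ b : ∀ j, F j, blockTranslate b ∈ graphAut G := by
      refine blockTranslate_mem_of_single fun j c => ?_
      by_cases hj : T j
      · exact h1 j hj c
      · obtain ⟨k, hk, hki⟩ := hgen j hj c
        have : blockTranslate (Pi.single j c) = mixedPerm T l ^ k := by
          ext ⟨i, x⟩ : 1
          by_cases hij : i = j
          · subst hij
            rw [mixedPerm_pow_apply_of_notMem T l hj, hk]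
            simp
          · by_cases hi : T i
            · rw [mixedPerm_pow_apply_of_mem T l hi, (hki i hij).1 hi]
              simp [hij]
            · rw [mixedPerm_pow_apply_of_notMem T l hi, (hki i hij).2 hi]
              simp [hij]
        rw [this]
        exact pow_mem h2 k
    refine ⟨h3, ?_⟩
    have := mul_mem (inv_mem (h3 (shiftOff T))) h2
    rwa [mixedPerm, inv_mul_cancel_left] at this
  · rintro ⟨h1, h2⟩
    exact ⟨fun j _ c => h1 _, mul_mem (h1 _) h2⟩

lemma adj_of_sub_eq {G : SimpleGraph (Σ j, F j)} (h1 : ∀ b : ∀ j, F j, blockTranslate b ∈ graphAut G)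
    (h2 : blockScale l ∈ graphAut G) {j : J} {x y x' y' : F j} (hxy : G.Adj ⟨j, x⟩ ⟨j, y⟩) (k : ℕ)
    (hk : y' - x' = (y - x) * ((l j ^ k : (F j)ˣ) : F j)) : G.Adj ⟨j, x'⟩ ⟨j, y'⟩ := by
  classical
  have h3 := (mem_graphAut.1 (pow_mem h2 k) _ _).2 hxy
  rw [← blockScale_pow] at h3
  have h4 := (mem_graphAut.1 (h1 (Pi.single j (x' - ((l j ^ k : (F j)ˣ) : F j) * x))) _ _).2 h3
  simp only [blockScale_apply, blockTranslate_apply, Pi.single_eq_same, Pi.pow_apply] at h4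
  convert h4 using 2
  · ring
  · linear_combination hk

end Blocks

section BlockInvariant

variable {V : Type} {H : SimpleGraph V} {J : Type} {F : J → Type} [∀ j, Field (F j)]

lemma containsCopy_comap_fst_iff (hemb : ∀ j, ∃ f : V → F j, Function.Injective f)
    (G : SimpleGraph J) :
    ContainsCopy H (G.comap (Sigma.fst : (Σ j, F j) → J)) ↔ Nonempty (H →g G) := by
  constructor
  · rintro ⟨f, -, h⟩
    exact ⟨⟨fun v => (f v).1, fun {v w} hvw => h v w hvw⟩⟩
  · rintro ⟨φ⟩
    choose f hf using hemb
    refine ⟨fun v => ⟨φ v, f (φ v) v⟩, fun v w hvw => ?_, fun v w hvw => φ.map_adj hvw⟩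
    have h1 : φ v = φ w := congrArg Sigma.fst hvw
    have h2 : f (φ v) v = f (φ v) w := by
      have h3 : (⟨φ v, f (φ v) v⟩ : Σ j, F j) = ⟨φ v, f (φ v) w⟩ := hvw.trans (by
        change (⟨φ w, f (φ w) w⟩ : Σ j, F j) = _
        rw [h1])
      simpa using h3
    exact hf _ h2

lemma not_adj_of_containsCopy_free {l : ∀ j, (F j)ˣ}
    (hclique : ∀ j, ∀ c : F j, c ≠ 0 → ∃ f : V → F j, Function.Injective f ∧ ∀ v w, v ≠ w →
      ∃ k : ℕ, f w - f v = c * ((l j ^ k : (F j)ˣ) : F j) ∨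
        f v - f w = c * ((l j ^ k : (F j)ˣ) : F j))
    {G : SimpleGraph (Σ j, F j)} (h1 : ∀ b : ∀ j, F j, blockTranslate b ∈ graphAut G)
    (h2 : blockScale l ∈ graphAut G) (hG : ¬ ContainsCopy H G) (j : J) (x y : F j) :
    ¬ G.Adj ⟨j, x⟩ ⟨j, y⟩ := by
  intro hxy
  have hne : y - x ≠ 0 := fun h => G.ne_of_adj hxy (by rw [sub_eq_zero.1 h])
  obtain ⟨f, hf, hfk⟩ := hclique j _ hne
  refine hG ⟨fun v => ⟨j, f v⟩, sigma_mk_injective.comp hf, fun v w hvw => ?_⟩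
  obtain ⟨k, hk | hk⟩ := hfk v w (H.ne_of_adj hvw)
  · exact adj_of_sub_eq l h1 h2 hxy k hk
  · exact (adj_of_sub_eq l h1 h2 hxy k hk).symm

lemma eq_comap_fst {G : SimpleGraph (Σ j, F j)}
    (h1 : ∀ b : ∀ j, F j, blockTranslate b ∈ graphAut G)
    (h2 : ∀ j (x y : F j), ¬ G.Adj ⟨j, x⟩ ⟨j, y⟩) :
    G = (G.comap fun j => (⟨j, 0⟩ : Σ j, F j)).comap Sigma.fst := by
  classical
  ext ⟨i, x⟩ ⟨j, y⟩
  simp only [SimpleGraph.comap_adj]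
  by_cases hij : i = j
  · subst hij
    simp [h2]
  · have h3 := mem_graphAut.1 (h1 (Pi.single i x + Pi.single j y)) ⟨i, 0⟩ ⟨j, 0⟩
    simpa [hij, Ne.symm hij] using h3

lemma blockTranslate_mem_comap_fst (G : SimpleGraph J) (b : ∀ j, F j) :
    blockTranslate b ∈ graphAut (G.comap (Sigma.fst : (Σ j, F j) → J)) := fun _ _ => Iff.rfl

lemma blockScale_mem_comap_fst (G : SimpleGraph J) (u : ∀ j, (F j)ˣ) :
    blockScale u ∈ graphAut (G.comap (Sigma.fst : (Σ j, F j) → J)) := fun _ _ => Iff.rfl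

open Classical in
lemma card_invariant_eq [Fintype J] [∀ j, Fintype (F j)] {l : ∀ j, (F j)ˣ}
    (hclique : ∀ j, ∀ c : F j, c ≠ 0 → ∃ f : V → F j, Function.Injective f ∧ ∀ v w, v ≠ w →
      ∃ k : ℕ, f w - f v = c * ((l j ^ k : (F j)ˣ) : F j) ∨
        f v - f w = c * ((l j ^ k : (F j)ˣ) : F j)) :
    (Finset.univ.filter fun G : SimpleGraph (Σ j, F j) => ¬ ContainsCopy H G ∧
      (∀ b : ∀ j, F j, blockTranslate b ∈ graphAut G) ∧ blockScale l ∈ graphAut G).card =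
    (Finset.univ.filter fun G : SimpleGraph J => ¬ Nonempty (H →g G)).card := by
  have hemb : ∀ j, ∃ f : V → F j, Function.Injective f := fun j =>
    (hclique j 1 one_ne_zero).imp fun _ h => h.1
  refine Finset.card_bij' (fun G _ => G.comap fun j => (⟨j, 0⟩ : Σ j, F j))
    (fun G _ => G.comap Sigma.fst) ?_ ?_ ?_ ?_
  · intro G hG
    simp only [Finset.mem_filter, Finset.mem_univ, true_and] at hG ⊢
    rw [← containsCopy_comap_fst_iff hemb, ← eq_comap_fst hG.2.1
      (not_adj_of_containsCopy_free hclique hG.2.1 hG.2.2 hG.1)]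
    exact hG.1
  · intro G hG
    simp only [Finset.mem_filter, Finset.mem_univ, true_and] at hG ⊢
    exact ⟨by rwa [containsCopy_comap_fst_iff hemb], blockTranslate_mem_comap_fst G,
      blockScale_mem_comap_fst G l⟩
  · intro G hG
    simp only [Finset.mem_filter, Finset.mem_univ, true_and] at hG
    exact (eq_comap_fst hG.2.1
      (not_adj_of_containsCopy_free hclique hG.2.1 hG.2.2 hG.1)).symm
  · intro G _
    rfl

variable (T : J → Prop) (l : ∀ j, (F j)ˣ)

lemma mixedPerm_conj_translate (b : ∀ j, F j) :
    mixedPerm T l * blockTranslate b * (mixedPerm T l)⁻¹ =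
      blockTranslate fun j => scaleOn T l j * b j := by
  rw [← blockTranslate_conj_translate (shiftOff T) fun j => (scaleOn T l j : F j) * b j,
    ← blockScale_conj_translate, mixedPerm, mul_inv_rev]
  simp only [mul_assoc]

lemma scaleOn_mul_single [DecidableEq J] {j : J} (hj : T j) (b : F j) :
    (fun i => (scaleOn T l i : F i) * Pi.single (M := F) j b i) = Pi.single j (l j * b) := by
  ext i
  by_cases hij : i = j
  · subst hij
    simp [scaleOn, hj]
  · simp [hij]

lemma scaleOn_mul_scaleOn_not : scaleOn T l * scaleOn (fun j => ¬ T j) l = l := by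
  ext j
  by_cases hj : T j <;> simp [scaleOn, hj]

lemma comapIso_iterate {W : Type*} (e : Equiv.Perm W) (G : SimpleGraph W) (k : ℕ) :
    (comapIso e)^[k] G = comapIso (e ^ k) G := by
  induction k with
  | zero => rfl
  | succ k ih => rw [Function.iterate_succ_apply', ih, comapIso_comapIso, pow_succ]

open Classical in
lemma card_scaleOn_invariant_eq [Fintype J] [∀ j, Fintype (F j)] {s : ℕ}
    (hclique : ∀ j, ∀ c : F j, c ≠ 0 → ∃ f : V → F j, Function.Injective f ∧ ∀ v w, v ≠ w →
      ∃ k : ℕ, f w - f v = c * ((l j ^ k : (F j)ˣ) : F j) ∨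
        f v - f w = c * ((l j ^ k : (F j)ˣ) : F j))
    (hs : ∀ j, ¬ T j → l j ^ 2 ^ s = 1) :
    ((Finset.univ.filter fun G : SimpleGraph (Σ j, F j) => ¬ ContainsCopy H G ∧
      (∀ b : ∀ j, F j, blockTranslate b ∈ graphAut G) ∧
        blockScale (scaleOn T l) ∈ graphAut G).card : ZMod 2) =
    ((Finset.univ.filter fun G : SimpleGraph (Σ j, F j) => ¬ ContainsCopy H G ∧
      (∀ b : ∀ j, F j, blockTranslate b ∈ graphAut G) ∧ blockScale l ∈ graphAut G).card :
        ZMod 2) := by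
  set u := scaleOn (fun j => ¬ T j) l with hu
  rw [card_eq_card_filter_fixed (comapIso (blockScale u)) s]
  · rw [Finset.filter_filter]
    congr 3
    ext G
    rw [comapIso_eq_self]
    have hl : blockScale l = blockScale (scaleOn T l) * blockScale u := by
      rw [← blockScale_mul, hu, scaleOn_mul_scaleOn_not]
    constructor
    · rintro ⟨⟨h0, h1, h2⟩, h3⟩
      exact ⟨h0, h1, hl ▸ mul_mem h2 h3⟩
    · rintro ⟨h0, h1, h2⟩
      have hG := eq_comap_fst h1 (not_adj_of_containsCopy_free hclique h1 h2 h0)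
      have hsc : ∀ w, blockScale w ∈ graphAut G := fun w => by
        rw [hG]
        exact blockScale_mem_comap_fst _ _
      exact ⟨⟨h0, h1, hsc _⟩, hsc _⟩
  · intro G hG
    simp only [Finset.mem_filter, Finset.mem_univ, true_and] at hG ⊢
    refine ⟨by rw [ContainsCopy.of_comapIso]; exact hG.1, fun b => ?_, ?_⟩
    · rw [mem_graphAut_comapIso, blockScale_conj_translate]
      exact hG.2.1 _
    · rw [mem_graphAut_comapIso, blockScale_conj_scale]
      exact hG.2.2
  · intro G _
    rw [comapIso_iterate, ← blockScale_pow]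
    have : u ^ 2 ^ s = 1 := by
      ext j
      by_cases hj : T j <;> simp [hu, scaleOn, hj]
      rw [← Units.val_pow_eq_pow_val, hs j hj, Units.val_one]
    rw [this, blockScale_one]
    rfl

open Classical in
theorem not_acyclicFamily_containsCopy_free [Fintype J] [∀ j, Fintype (F j)] {s : ℕ}
    (hH : H.edgeSet.Nonempty)
    (hT : ∀ j, T j → ∀ x : F j, x + x = 0)
    (hgen : ∀ j, ¬ T j → ∀ c : F j, ∃ k : ℕ, (k : F j) = c ∧
      ∀ i, i ≠ j → (T i → l i ^ k = 1) ∧ (¬ T i → (k : F i) = 0))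
    (hclique : ∀ j, ∀ c : F j, c ≠ 0 → ∃ f : V → F j, Function.Injective f ∧ ∀ v w, v ≠ w →
      ∃ k : ℕ, f w - f v = c * ((l j ^ k : (F j)ˣ) : F j) ∨
        f v - f w = c * ((l j ^ k : (F j)ˣ) : F j))
    (hs : ∀ j, ¬ T j → l j ^ 2 ^ s = 1)
    (hodd : Odd (Finset.univ.filter fun G : SimpleGraph J => ¬ Nonempty (H →g G)).card) :
    ¬ AcyclicFamily (chainFamily ({G : SimpleGraph (Σ j, F j) | ¬ ContainsCopy H G} \ {⊥})) := by
  intro hacyc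
  let P : Finset (SimpleGraph (Σ j, F j) ≃o SimpleGraph (Σ j, F j)) :=
    (Finset.univ.filter fun a : Σ j, F j => T a.1).image fun a =>
      comapIso (blockTranslate (Pi.single a.1 a.2))
  have hP : ∀ σ, σ ∈ P ↔ ∃ j, T j ∧ ∃ c : F j, comapIso (blockTranslate (Pi.single j c)) = σ := by
    intro σ
    simp only [P, Finset.mem_image, Finset.mem_filter, Finset.mem_univ, true_and]
    exact ⟨fun ⟨a, ha, e⟩ => ⟨a.1, ha, a.2, e⟩, fun ⟨j, hj, c, e⟩ => ⟨⟨j, c⟩, hj, e⟩⟩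
  have heven := even_card_fixed_of_acyclic {G : SimpleGraph (Σ j, F j) | ¬ ContainsCopy H G}
    (by
      obtain ⟨e, he⟩ := hH
      induction e using Sym2.ind with
      | _ v w => exact fun ⟨f, _, hf⟩ => hf v w he)
    (fun _ _ hle hG ⟨f, hf, h⟩ =>
      hG ⟨f, hf, fun v w hvw => SimpleGraph.le_iff_adj.1 hle _ _ (h v w hvw)⟩)
    hacyc
    P
    (by
      simp only [hP]
      rintro _ ⟨j, hj, c, rfl⟩ G
      rw [comapIso_comapIso, ← blockTranslate_add, ← Pi.single_add, hT j hj, Pi.single_zero,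
        blockTranslate_zero]
      rfl)
    (by
      simp only [hP]
      rintro _ ⟨j, hj, c, rfl⟩ _ ⟨j', hj', c', rfl⟩ G
      rw [comapIso_comapIso, comapIso_comapIso, ← blockTranslate_add, ← blockTranslate_add,
        add_comm])
    (by
      simp only [hP]
      rintro _ ⟨j, hj, c, rfl⟩ G hG
      exact fun h => hG ((ContainsCopy.of_comapIso _).1 h))
    (comapIso (mixedPerm T l))
    (fun G => not_congr (ContainsCopy.of_comapIso _))
    (by
      simp only [hP]
      intro G
      constructor
      · rintro h _ ⟨j, hj, c, rfl⟩
        have := h _ ⟨j, hj, ((l j)⁻¹ : (F j)ˣ) * c, rfl⟩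
        rw [comapIso_eq_self, mem_graphAut_comapIso, mixedPerm_conj_translate,
          scaleOn_mul_single T l hj, Units.mul_inv_cancel_left] at this
        exact comapIso_eq_self.2 this
      · rintro h _ ⟨j, hj, c, rfl⟩
        rw [comapIso_eq_self, mem_graphAut_comapIso, mixedPerm_conj_translate,
          scaleOn_mul_single T l hj, ← comapIso_eq_self]
        exact h _ ⟨j, hj, _, rfl⟩)
  have hodd' : ¬ Even (Finset.univ.filter fun G : SimpleGraph (Σ j, F j) => ¬ ContainsCopy H G ∧
      (∀ b : ∀ j, F j, blockTranslate b ∈ graphAut G) ∧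
        blockScale (scaleOn T l) ∈ graphAut G).card := by
    rw [← ZMod.natCast_eq_zero_iff_even, card_scaleOn_invariant_eq T l hclique hs,
      card_invariant_eq hclique, ZMod.natCast_eq_zero_iff_even, Nat.not_even_iff_odd]
    exact hodd
  apply hodd'
  convert heven using 3 with G
  rw [← invariant_iff T l hgen]
  simp only [hP, ← comapIso_eq_self,
    Set.mem_ofPred_eq]
  constructor
  · rintro ⟨h0, h1, h2⟩
    refine ⟨h0, ?_, h2⟩
    rintro _ ⟨j, hj, c, rfl⟩
    exact h1 j hj c
  · rintro ⟨h0, h1, h2⟩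
    exact ⟨h0, fun j hj c => h1 _ ⟨j, hj, c, rfl⟩, h2⟩

end BlockInvariant

open Classical in
lemma DecisionTree.exists_eval_eq {ι : Type} (s : Finset ι) : ∀ f : (ι → Bool) → Bool,
    (∀ x y, (∀ i ∈ s, x i = y i) → f x = f y) →
    ∃ T : DecisionTree ι, (∀ x, T.eval x = f x) ∧ T.depth ≤ s.card := by
  induction s using Finset.induction_on with
  | empty => exact fun f hf => ⟨.leaf (f fun _ => true), fun x => hf _ _ (by simp), le_rfl⟩
  | insert a s ha ih =>
    intro f hf
    have key : ∀ b, ∃ T : DecisionTree ι,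
        (∀ x, T.eval x = f (Function.update x a b)) ∧ T.depth ≤ s.card := fun b =>
      ih (fun x => f (Function.update x a b)) fun x y hxy => hf _ _ fun i hi => by
        by_cases hia : i = a
        · subst hia
          simp
        · simp [hia, hxy i ((Finset.mem_insert.1 hi).resolve_left hia)]
    obtain ⟨T₁, h₁, d₁⟩ := key true
    obtain ⟨T₀, h₀, d₀⟩ := key false
    refine ⟨.node a T₁ T₀, fun x => ?_, ?_⟩
    · have hx' : Function.update x a (x a) = x := Function.update_eq_self a x
      cases hx : x a <;> rw [hx] at hx' <;> simp [DecisionTree.eval, hx, h₀, h₁, hx']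
    · rw [Finset.card_insert_of_notMem ha]
      exact Nat.succ_le_succ (max_le d₁ d₀)

instance (n : ℕ) : Fintype (EdgeVar n) :=
  inferInstanceAs (Fintype {p : Fin n × Fin n // p.1 < p.2})

instance (n : ℕ) : DecidableEq (EdgeVar n) :=
  inferInstanceAs (DecidableEq {p : Fin n × Fin n // p.1 < p.2})

lemma card_edgeVar (n : ℕ) : Fintype.card (EdgeVar n) = n * (n - 1) / 2 := by
  have h : Fintype.card (EdgeVar n) = ∑ j : Fin n, (j : ℕ) := by
    change Fintype.card {p : Fin n × Fin n // p.1 < p.2} = _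
    rw [Fintype.card_subtype, Finset.card_filter, Fintype.sum_prod_type_right]
    refine Finset.sum_congr rfl fun j _ => ?_
    rw [← Finset.card_filter, ← Fin.card_Iio j]
    congr 1
    ext i
    simp
  rw [h, Fin.sum_univ_eq_sum_range (fun i => i), Finset.sum_range_id]

/-- The variable of the pair `i < j`. -/
def EdgeVar.mk {n : ℕ} {i j : Fin n} (h : i < j) : EdgeVar n := ⟨(i, j), h⟩

lemma graphOfInput_adj {n : ℕ} (x : EdgeVar n → Bool) {i j : Fin n} (h : i < j) :
    (graphOfInput x).Adj i j ↔ x (EdgeVar.mk h) = true := by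
  simp [graphOfInput, SimpleGraph.fromRel_adj, EdgeVar.mk, h, h.ne, h.le]

lemma le_iff_of_lt {n : ℕ} {G G' : SimpleGraph (Fin n)} :
    G ≤ G' ↔ ∀ i j, i < j → G.Adj i j → G'.Adj i j := by
  refine ⟨fun h i j _ hij => h hij, fun h i j hij => ?_⟩
  rcases lt_trichotomy i j with hlt | rfl | hlt
  · exact h i j hlt hij
  · exact absurd hij (G.loopless.irrefl i)
  · exact (h j i hlt hij.symm).symm

section Transport

variable {V W : Type} {n : ℕ}

/-- The graph on `W` whose edges are the given variables, transported along `e`. -/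
def edgeSetGraph (e : Fin n ≃ W) (A : Finset (EdgeVar n)) : SimpleGraph W :=
  (graphOfInput fun i => decide (i ∈ A)).comap e.symm

lemma edgeSetGraph_le_iff (e : Fin n ≃ W) (A B : Finset (EdgeVar n)) :
    edgeSetGraph e A ≤ edgeSetGraph e B ↔ A ≤ B := by
  have h : edgeSetGraph e A ≤ edgeSetGraph e B ↔ (graphOfInput fun i => decide (i ∈ A)) ≤
      graphOfInput fun i => decide (i ∈ B) := by
    refine ⟨fun h x y hxy => ?_, fun h x y hxy => h hxy⟩
    have := @h (e x) (e y) (by simpa [edgeSetGraph] using hxy)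
    simpa [edgeSetGraph] using this
  rw [h, le_iff_of_lt]
  constructor
  · rintro h ⟨⟨i, j⟩, hij⟩ hA
    have h' := h i j hij
    rw [graphOfInput_adj _ hij, graphOfInput_adj _ hij, decide_eq_true_iff,
      decide_eq_true_iff] at h'
    exact h' hA
  · intro h i j hij hA
    rw [graphOfInput_adj _ hij, decide_eq_true_iff] at hA ⊢
    exact h hA

lemma edgeSetGraph_surjective (e : Fin n ≃ W) : Function.Surjective (edgeSetGraph e) := by
  classical
  intro G
  refine ⟨Finset.univ.filter fun i => G.Adj (e i.1.1) (e i.1.2), ?_⟩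
  have h : (graphOfInput fun i => decide
      (i ∈ Finset.univ.filter fun i : EdgeVar n => G.Adj (e i.1.1) (e i.1.2))) = G.comap e := by
    apply le_antisymm <;> rw [le_iff_of_lt] <;> intro i j hij <;>
      rw [graphOfInput_adj _ hij, decide_eq_true_iff, Finset.mem_filter]
    · exact fun h => h.2
    · exact fun h => ⟨Finset.mem_univ _, h⟩
  rw [edgeSetGraph, h]
  ext x y
  simp

lemma containsCopy_edgeSetGraph_iff (e : Fin n ≃ W) (H : SimpleGraph V) (A : Finset (EdgeVar n)) :
    ContainsCopy H (edgeSetGraph e A) ↔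
      ContainsCopy H (graphOfInput fun i => decide (i ∈ A)) := by
  constructor
  · rintro ⟨f, hf, h⟩
    exact ⟨e.symm ∘ f, e.symm.injective.comp hf, h⟩
  · rintro ⟨f, hf, h⟩
    exact ⟨e ∘ f, e.injective.comp hf, fun v w hvw => by simpa [edgeSetGraph] using h v w hvw⟩

theorem evasive_of_not_acyclicFamily [Fintype (SimpleGraph W)] [DecidableEq (SimpleGraph W)]
    (e : Fin n ≃ W) (H : SimpleGraph V) (hH : H.edgeSet.Nonempty)
    (hW : ¬ AcyclicFamily (chainFamily ({G : SimpleGraph W | ¬ ContainsCopy H G} \ {⊥}))) :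
    Evasive (ForbiddenSubgraphProperty H n) := by
  classical
  obtain ⟨T, hT, hd⟩ := DecisionTree.exists_eval_eq (Finset.univ : Finset (EdgeVar n))
    (fun x => decide (graphOfInput x ∈ ForbiddenSubgraphProperty H n))
    (fun x y hxy => by rw [funext fun i => hxy i (Finset.mem_univ i)])
  rw [Evasive, queryComplexity, ← card_edgeVar]
  refine le_antisymm (Nat.sInf_le ⟨T, fun x => by rw [hT, decide_eq_true_iff], hd⟩)
    (le_csInf ⟨_, T, fun x => by rw [hT, decide_eq_true_iff], hd⟩ ?_)
  rintro d ⟨T, hT, hd⟩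
  by_contra hlt
  set Δ : Set (Finset (EdgeVar n)) := {A | ¬ ContainsCopy H (edgeSetGraph e A)} with hΔ
  have hbot : edgeSetGraph e ∅ = ⊥ :=
    le_bot_iff.1 (by
      obtain ⟨A, hA⟩ := edgeSetGraph_surjective e ⊥
      rw [← hA, edgeSetGraph_le_iff]
      exact Finset.empty_subset A)
  have hac := acyclicFamily_of_depth_lt T ∅ Finset.univ Δ (Finset.disjoint_empty_left _)
    (fun A hA B hBA ⟨f, hf, h⟩ => hA ⟨f, hf, fun v w hvw =>
      SimpleGraph.le_iff_adj.1 ((edgeSetGraph_le_iff e B A).2 hBA) _ _ (h v w hvw)⟩)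
    (fun A _ => Finset.subset_univ A)
    (fun A _ => by
      rw [hT, Finset.union_empty, hΔ, Set.mem_ofPred_eq, containsCopy_edgeSetGraph_iff]
      rfl)
    (by rw [Finset.card_univ]; omega)
    (by
      rw [hΔ, Set.mem_ofPred_eq, hbot]
      obtain ⟨z, hz⟩ := hH
      induction z using Sym2.ind with
      | _ v w => exact fun ⟨f, _, hf⟩ => hf v w hz)
  have himg := acyclicFamily_chainFamily_image (edgeSetGraph e)
    (fun A _ B _ => edgeSetGraph_le_iff e A B) hac
  apply hW
  convert himg using 2
  ext G
  constructor
  · rintro ⟨h1, h2⟩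
    obtain ⟨A, rfl⟩ := edgeSetGraph_surjective e G
    exact ⟨A, ⟨h1, fun hA => h2 (by rw [hA, hbot]; rfl)⟩, rfl⟩
  · rintro ⟨A, ⟨h1, h2⟩, rfl⟩
    refine ⟨h1, fun hA => h2 ?_⟩
    rw [Set.mem_singleton_iff, ← hbot] at hA
    exact le_antisymm ((edgeSetGraph_le_iff e _ _).1 hA.le) (Finset.empty_subset A)

end Transport

open Classical in
theorem evasive_of_block_family {V : Type} {H : SimpleGraph V} {J : Type} {F : J → Type}
    [∀ j, Field (F j)] [Fintype J] [∀ j, Fintype (F j)] (T : J → Prop) (l : ∀ j, (F j)ˣ) {s n : ℕ}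
    (hn : Fintype.card (Σ j, F j) = n)
    (hH : H.edgeSet.Nonempty)
    (hT : ∀ j, T j → ∀ x : F j, x + x = 0)
    (hgen : ∀ j, ¬ T j → ∀ c : F j, ∃ k : ℕ, (k : F j) = c ∧
      ∀ i, i ≠ j → (T i → l i ^ k = 1) ∧ (¬ T i → (k : F i) = 0))
    (hclique : ∀ j, ∀ c : F j, c ≠ 0 → ∃ f : V → F j, Function.Injective f ∧ ∀ v w, v ≠ w →
      ∃ k : ℕ, f w - f v = c * ((l j ^ k : (F j)ˣ) : F j) ∨
        f v - f w = c * ((l j ^ k : (F j)ˣ) : F j))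
    (hs : ∀ j, ¬ T j → l j ^ 2 ^ s = 1)
    (hodd : Odd (Finset.univ.filter fun G : SimpleGraph J => ¬ Nonempty (H →g G)).card) :
    Evasive (ForbiddenSubgraphProperty H n) :=
  evasive_of_not_acyclicFamily (Fintype.equivFinOfCardEq hn).symm H hH
    (not_acyclicFamily_containsCopy_free T l hH hT hgen hclique hs hodd)

/-- A finite field with a distinguished nonzero scalar. -/
structure FieldBlock where
  /-- The underlying field. -/
  carrier : Type
  [field : Field carrier]
  [fintype : Fintype carrier]
  /-- The distinguished scalar. -/
  scalar : carrierˣ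

attribute [instance] FieldBlock.field FieldBlock.fintype

/-- Every nonzero difference class of the block contains a clique on `V`. -/
def FieldBlock.HasCliques (V : Type) (B : FieldBlock) : Prop :=
  ∀ c : B.carrier, c ≠ 0 → ∃ f : V → B.carrier, Function.Injective f ∧ ∀ v w, v ≠ w →
    ∃ k : ℕ, f w - f v = c * ((B.scalar ^ k : B.carrierˣ) : B.carrier) ∨
      f v - f w = c * ((B.scalar ^ k : B.carrierˣ) : B.carrier)

lemma exists_binary_block (V : Type) [Fintype V] {m : ℕ} (hm : m ≠ 0)
    (hV : Fintype.card V ≤ 2 ^ m) :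
    ∃ B : FieldBlock, Fintype.card B.carrier = 2 ^ m ∧ (∀ x : B.carrier, x + x = 0) ∧
      B.scalar ^ (2 ^ m - 1) = 1 ∧ B.HasCliques V := by
  classical
  have : Fintype (GaloisField 2 m) := Fintype.ofFinite _
  have hcard : Fintype.card (GaloisField 2 m) = 2 ^ m := by
    rw [← Nat.card_eq_fintype_card, GaloisField.card 2 m hm]
  obtain ⟨g, hg⟩ := IsCyclic.exists_generator (α := (GaloisField 2 m)ˣ)
  refine ⟨⟨GaloisField 2 m, g⟩, hcard, fun x => CharTwo.add_self_eq_zero x, ?_, ?_⟩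
  · have : Fintype.card (GaloisField 2 m)ˣ = 2 ^ m - 1 := by rw [Fintype.card_units, hcard]
    rw [← this]
    exact pow_card_eq_one
  · intro c hc
    obtain ⟨f⟩ := Function.Embedding.nonempty_of_card_le (hV.trans hcard.ge)
    refine ⟨f, f.injective, fun v w hvw => ?_⟩
    have hne : (f w - f v) / c ≠ 0 :=
      div_ne_zero (sub_ne_zero.2 (f.injective.ne hvw.symm)) hc
    obtain ⟨k, hk⟩ := mem_powers_iff_mem_zpowers.2 (hg (Units.mk0 _ hne))
    refine ⟨k, Or.inl ?_⟩
    simp only at hk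
    change f w - f v = c * ((g ^ k : (GaloisField 2 m)ˣ) : GaloisField 2 m)
    rw [hk, Units.val_mk0, mul_div_cancel₀ _ hc]

lemma exists_prime_block (V : Type) [Fintype V] [Nonempty V] {p m s : ℕ} (hp : p.Prime)
    (hpm : p - 1 = m * 2 ^ s) (hm : m ^ (2 * Fintype.card V) ≤ p)
    (hpV : 4 ^ ((Fintype.card V + 1) * (2 * Fintype.card V)) < p) :
    ∃ B : FieldBlock, Fintype.card B.carrier = p ∧
      (∀ c : B.carrier, ∃ k₀ : ℕ, ∀ k, k ≡ k₀ [MOD p] → (k : B.carrier) = c) ∧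
      (∀ k, p ∣ k → (k : B.carrier) = 0) ∧ B.scalar ^ 2 ^ s = 1 ∧ B.HasCliques V := by
  classical
  have : Fact p.Prime := ⟨hp⟩
  obtain ⟨g, hg⟩ := IsCyclic.exists_ofOrder_eq_natCard (α := (ZMod p)ˣ)
  rw [Nat.card_eq_fintype_card, ZMod.card_units_eq_totient, Nat.totient_prime hp, hpm] at hg
  have hm0 : m ≠ 0 := by
    rintro rfl
    have := hp.two_le
    omega
  have hord : orderOf (g ^ m) = 2 ^ s := by
    rw [orderOf_pow_of_dvd hm0 (hg ▸ dvd_mul_right _ _), hg,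
      Nat.mul_div_cancel_left _ (Nat.pos_of_ne_zero hm0)]
  refine ⟨⟨ZMod p, g ^ m⟩, ZMod.card p, fun c => ⟨c.val, fun k hk => ?_⟩, fun k hk => ?_,
    ?_, fun c hc => ?_⟩
  · have h := (ZMod.natCast_eq_natCast_iff k c.val p).2 hk
    rwa [ZMod.natCast_zmod_val] at h
  · exact (ZMod.natCast_eq_zero_iff k p).2 hk
  · rw [← hord]
    exact pow_orderOf_eq_one _
  · obtain ⟨v, hv⟩ := exists_paley_clique (Subgroup.zpowers (g ^ m))
      (by rw [Nat.card_zpowers, hord]; exact hpm) Fintype.card_pos hm hpV hc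
    have hpow : ∀ i j, i < j →
        ∃ k : ℕ, v j - v i = c * (((g ^ m) ^ k : (ZMod p)ˣ) : ZMod p) := fun i j hij => by
      obtain ⟨u, hu, h⟩ := hv i j hij
      obtain ⟨k, rfl⟩ := mem_powers_iff_mem_zpowers.2 hu
      exact ⟨k, h⟩
    have hlt : ∀ i j, i < j → v i ≠ v j := fun i j hij h => by
      obtain ⟨k, hk⟩ := hpow i j hij
      rw [h, sub_self] at hk
      exact mul_ne_zero hc (Units.ne_zero _) hk.symm
    have hinj : Function.Injective v := fun i j h => by
      rcases lt_trichotomy i j with hij | hij | hij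
      · exact absurd h (hlt i j hij)
      · exact hij
      · exact absurd h.symm (hlt j i hij)
    refine ⟨v ∘ Fintype.equivFin V, hinj.comp (Equiv.injective _), fun x y hxy => ?_⟩
    rcases lt_or_gt_of_ne ((Fintype.equivFin V).injective.ne hxy) with hij | hij
    · exact (hpow _ _ hij).imp fun k hk => Or.inl hk
    · exact (hpow _ _ hij).imp fun k hk => Or.inr hk

theorem evasive_of_blocks {V : Type} [Fintype V] (H : SimpleGraph V) (hH : H.edgeSet.Nonempty)
    {t a b c k n : ℕ} (ht : Fintype.card V ≤ 2 ^ 2 ^ t) (p : Fin c → ℕ)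
    (hinj : Function.Injective p) (hp : ∀ i, (p i).Prime) (hpq : ∀ i, 2 ^ (2 ^ t + 1) < p i)
    (m s : Fin c → ℕ) (hpm : ∀ i, p i - 1 = m i * 2 ^ s i)
    (hm : ∀ i, m i ^ (2 * Fintype.card V) ≤ p i)
    (hpV : ∀ i, 4 ^ ((Fintype.card V + 1) * (2 * Fintype.card V)) < p i)
    (hn : a * 2 ^ 2 ^ t + b * 2 ^ (2 ^ t + 1) + ∑ i, p i = n)
    (hcount : a + b + c = 1 + k * (2 ^ 2 ^ t - 1)) :
    Evasive (ForbiddenSubgraphProperty H n) := by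
  classical
  have : Nonempty V := by
    obtain ⟨z, -⟩ := hH
    induction z using Sym2.ind with
    | _ v w => exact ⟨v⟩
  obtain ⟨B₁, hB₁, hB₁two, hB₁pow, hB₁V⟩ := exists_binary_block V (pow_ne_zero t two_ne_zero) ht
  obtain ⟨B₂, hB₂, hB₂two, hB₂pow, hB₂V⟩ := exists_binary_block V (m := 2 ^ t + 1)
    (Nat.succ_ne_zero _) (ht.trans (Nat.pow_le_pow_right two_pos (Nat.le_succ _)))
  choose C hC hCgen hCdvd hCpow hCV using fun i =>
    exists_prime_block V (hp i) (hpm i) (hm i) (hpV i)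
  let B : Fin a ⊕ Fin b ⊕ Fin c → FieldBlock :=
    Sum.elim (fun _ => B₁) (Sum.elim (fun _ => B₂) C)
  let T : Fin a ⊕ Fin b ⊕ Fin c → Prop :=
    Sum.elim (fun _ => True) (Sum.elim (fun _ => True) fun _ => False)
  have hcardW : Fintype.card (Σ j, (B j).carrier) = n := by
    have h : ∀ j, Fintype.card (B j).carrier =
        Sum.elim (fun _ => 2 ^ 2 ^ t) (Sum.elim (fun _ => 2 ^ (2 ^ t + 1)) p) j := by
      rintro (j | j | j)
      exacts [hB₁, hB₂, hC j]
    rw [Fintype.card_sigma, Finset.sum_congr rfl fun j _ => h j, Fintype.sum_sum_type,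
      Fintype.sum_sum_type, ← hn, add_assoc]
    simp
  refine evasive_of_block_family (s := ∑ i, s i) T (fun j => (B j).scalar) hcardW hH
    ?_ ?_ ?_ ?_ ?_
  · rintro (j | j | j) hj
    · exact hB₁two
    · exact hB₂two
    · exact hj.elim
  · rintro (j | j | j) hj z
    · exact absurd trivial hj
    · exact absurd trivial hj
    · obtain ⟨k₀, hk₀⟩ := hCgen j z
      set D := (2 ^ 2 ^ t - 1) * (2 ^ (2 ^ t + 1) - 1) * ∏ i ∈ Finset.univ.erase j, p i with hD
      have hpos : 2 ^ 2 ^ t ≠ 1 := by simp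
      have h2 : 2 ^ (2 ^ t + 1) = 2 * 2 ^ 2 ^ t := pow_succ' _ _
      have hpos' : 0 < 2 ^ 2 ^ t := by positivity
      have hlt := hpq j
      have hcop : Nat.Coprime (p j) D := by
        refine Nat.Coprime.mul_right (Nat.Coprime.mul_right ?_ ?_) (Nat.Coprime.prod_right ?_)
        · exact (hp j).coprime_iff_not_dvd.2 fun hd =>
            absurd (Nat.le_of_dvd (by omega) hd) (by omega)
        · exact (hp j).coprime_iff_not_dvd.2 fun hd =>
            absurd (Nat.le_of_dvd (by omega) hd) (by omega)
        · intro i hi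
          exact (Nat.coprime_primes (hp j) (hp i)).2 (hinj.ne (Finset.ne_of_mem_erase hi).symm)
      obtain ⟨x, hx₁, hx₂⟩ := Nat.chineseRemainder hcop k₀ 0
      have hDx : D ∣ x := (Nat.modEq_zero_iff_dvd).1 hx₂
      refine ⟨x, hk₀ x hx₁, ?_⟩
      rintro (i | i | i) hij
      · refine ⟨fun _ => ?_, fun h => absurd trivial h⟩
        exact orderOf_dvd_iff_pow_eq_one.1 ((orderOf_dvd_of_pow_eq_one hB₁pow).trans
          (((dvd_mul_right _ _).mul_right _).trans hDx))
      · refine ⟨fun _ => ?_, fun h => absurd trivial h⟩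
        exact orderOf_dvd_iff_pow_eq_one.1 ((orderOf_dvd_of_pow_eq_one hB₂pow).trans
          (((dvd_mul_left _ _).mul_right _).trans hDx))
      · refine ⟨fun h => h.elim, fun _ => hCdvd i x (Dvd.dvd.trans ?_ hDx)⟩
        exact (Finset.dvd_prod_of_mem p (Finset.mem_erase.2
          ⟨fun h => hij (by rw [h]), Finset.mem_univ _⟩)).mul_left _
  · rintro (j | j | j)
    · exact hB₁V
    · exact hB₂V
    · exact hCV j
  · rintro (j | j | j) hj
    · exact absurd trivial hj
    · exact absurd trivial hj
    · exact orderOf_dvd_iff_pow_eq_one.1 ((orderOf_dvd_of_pow_eq_one (hCpow j)).trans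
        (pow_dvd_pow 2 (Finset.single_le_sum (fun _ _ => Nat.zero_le _) (Finset.mem_univ j))))
  · exact odd_card_hom_free H hH t k ht (by simpa [add_assoc] using hcount)

lemma NearFermatPrime.exists_factorization {h p : ℕ} (hh : 0 < h)
    (hp : NearFermatPrime (1 / (2 * (h : ℝ))) p) :
    ∃ m s : ℕ, p - 1 = m * 2 ^ s ∧ m ^ (2 * h) ≤ p := by
  obtain ⟨_, s, hdvd, hle⟩ := hp
  refine ⟨(p - 1) / 2 ^ s, s, (Nat.div_mul_cancel hdvd).symm, ?_⟩
  have h1 := pow_le_pow_left₀ (Nat.cast_nonneg _) hle (2 * h)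
  rw [← Real.rpow_natCast ((p : ℝ) ^ _), ← Real.rpow_mul (Nat.cast_nonneg p)] at h1
  have h2 : 1 / (2 * (h : ℝ)) * ((2 * h : ℕ) : ℝ) = 1 := by
    push_cast
    field_simp
  rw [h2, Real.rpow_one] at h1
  exact_mod_cast h1

lemma two_pow_dvd_sub_one {h p m s r : ℕ} (hh : 0 < h) (hp : 1 < p) (hpm : p - 1 = m * 2 ^ s)
    (hm : m ^ (2 * h) ≤ p) (hr : (2 ^ r) ^ 2 < p) : 2 ^ r ∣ p - 1 := by
  rw [hpm]
  refine Dvd.dvd.mul_left (pow_dvd_pow 2 ?_) m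
  by_contra hlt
  have h1 : 2 ^ s * 2 ≤ 2 ^ r := by
    rw [← pow_succ]
    exact Nat.pow_le_pow_right two_pos (by omega)
  have hm0 : 0 < m := Nat.pos_of_ne_zero (by rintro rfl; omega)
  have hm2 : m ^ 2 ≤ p := (Nat.pow_le_pow_right hm0 (by omega)).trans hm
  have h2 : p ≤ m * 2 ^ r := by
    have h3 : m * (2 ^ s * 2) ≤ m * 2 ^ r := Nat.mul_le_mul_left m h1
    rw [← mul_assoc, ← hpm] at h3
    omega
  nlinarith

/-- If `H` has `h` vertices and at least one edge, and there are infinitely many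
`1/(2h)`-near Fermat primes, then `Q_n^H` is eventually evasive. -/
theorem forbidden_subgraph_eventually_evasive_of_near_fermat
    {V : Type} [Fintype V] (H : SimpleGraph V) (h : ℕ) (hcard : Fintype.card V = h)
    (hH : H.edgeSet.Nonempty)
    (hinf : {p : ℕ | NearFermatPrime (1 / (2 * (h : ℝ))) p}.Infinite) :
    ∃ N : ℕ, ∀ n : ℕ, N ≤ n → Evasive (ForbiddenSubgraphProperty H n) := by
  subst hcard
  have hh : 0 < Fintype.card V := by
    obtain ⟨z, -⟩ := hH
    induction z using Sym2.ind with
    | _ v w => exact Fintype.card_pos_iff.2 ⟨v⟩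
  set h := Fintype.card V with hdef
  obtain ⟨q, hq⟩ : ∃ q, q = 2 ^ 2 ^ h := ⟨_, rfl⟩
  have ht : h ≤ q := hq ▸ Nat.lt_two_pow_self.le.trans (Nat.lt_two_pow_self.le)
  have hq2 : 2 ≤ q := hq ▸ Nat.le_self_pow (pow_ne_zero h two_ne_zero) 2
  have hinf' := hinf.sdiff (Set.finite_Iic (q ^ 2 + 2 * q + 4 ^ ((h + 1) * (2 * h))))
  let f := Set.Infinite.natEmbedding _ hinf'
  obtain ⟨e, hinj, hmem⟩ : ∃ e : ℕ → ℕ, Function.Injective e ∧ ∀ i,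
      e i ∈ {p : ℕ | NearFermatPrime (1 / (2 * (h : ℝ))) p} \
        Set.Iic (q ^ 2 + 2 * q + 4 ^ ((h + 1) * (2 * h))) :=
    ⟨fun i => f i, Subtype.val_injective.comp f.injective, fun i => (f i).2⟩
  have hlarge : ∀ i, q ^ 2 + 2 * q + 4 ^ ((h + 1) * (2 * h)) < e i := fun i => not_le.1 (hmem i).2
  have hlarge₁ : ∀ i, q ^ 2 < e i := fun i =>
    ((Nat.le_add_right _ _).trans (Nat.le_add_right _ _)).trans_lt (hlarge i)
  have hlarge₂ : ∀ i, 2 * q < e i := fun i =>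
    ((Nat.le_add_left _ _).trans (Nat.le_add_right _ _)).trans_lt (hlarge i)
  have hlarge₃ : ∀ i, 4 ^ ((h + 1) * (2 * h)) < e i := fun i =>
    (Nat.le_add_left _ _).trans_lt (hlarge i)
  have hprime : ∀ i, (e i).Prime := fun i => (hmem i).1.1
  choose m s hpm hm using fun i => NearFermatPrime.exists_factorization hh (hmem i).1
  have hmod : ∀ i, e i ≡ 1 [MOD q] := fun i =>
    ((Nat.modEq_iff_dvd' (hprime i).one_lt.le).2 (hq ▸ two_pow_dvd_sub_one hh (hprime i).one_lt
      (hpm i) (hm i) (r := 2 ^ h) (by rw [← hq]; exact hlarge₁ i))).symm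
  refine ⟨∑ i ∈ Finset.range q, e i + q * (2 * q), fun n hn => ?_⟩
  set c := n % q with hc
  have hcq : c < q := Nat.mod_lt _ (by omega)
  set P := ∑ i ∈ Finset.range c, e i with hP
  have hPle : P ≤ ∑ i ∈ Finset.range q, e i :=
    Finset.sum_le_sum_of_subset (Finset.range_subset_range.2 hcq.le)
  have hPmod : P ≡ n [MOD q] := by
    have h1 : P ≡ ∑ i ∈ Finset.range c, 1 [MOD q] := Nat.ModEq.sum fun i _ => hmod i
    rw [Finset.sum_const, Finset.card_range, smul_eq_mul, mul_one] at h1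
    exact h1.trans (Nat.mod_modEq n q)
  obtain ⟨M, hM⟩ := (Nat.modEq_iff_dvd' (by omega)).1 hPmod
  have hM2 : 2 * q ≤ M := Nat.le_of_mul_le_mul_left (by omega : q * (2 * q) ≤ q * M) (by omega)
  set j := (M + c - 1) % (q - 1) with hj
  have hjq : j < q - 1 := Nat.mod_lt _ (by omega)
  have hdiv := Nat.div_add_mod' (M + c - 1) (q - 1)
  refine evasive_of_blocks H hH (t := h) (a := M - 2 * j) (b := j) (c := c)
    (k := (M + c - 1) / (q - 1)) (hq ▸ ht) (fun i => e i)
    (fun x y hxy => Fin.ext (hinj hxy)) (fun i => hprime i)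
    (fun i => ?_) (fun i => m i) (fun i => s i) (fun i => hpm i) (fun i => hm i)
    (fun i => hlarge₃ i) ?_ ?_
  · rw [pow_succ', ← hq]
    exact hlarge₂ i
  · rw [Fin.sum_univ_eq_sum_range (fun i => e i) c, ← hP, pow_succ', ← hq]
    have h1 : (M - 2 * j) * q + j * (2 * q) = q * M := by
      calc (M - 2 * j) * q + j * (2 * q) = q * (M - 2 * j + 2 * j) := by ring
        _ = q * M := by rw [Nat.sub_add_cancel (by omega)]
    omega
  · rw [← hq]
    omega
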